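/- arXiv:1904.01925 — 4 statements merged into one kernel-verified Lean document; each statement's English description precedes it below -/
import Mathlib

section
/- Fix n ∈ ℕ and set s₀ = ⌊(4n+2)/11⌋ and t₀ = ⌊10n/11⌋. Then for all integers s, t with 0 ≤ s ≤ t ≤ n, t ≥ 2s, and s ≥ n − t, one has M(n,s,t) ≥ M(n,s₀,t₀); that is, (s₀,t₀) minimizes the number of monochromatic Schur triples among all block colorings satisfying these constraints. -/
/-- The number of monochromatic Schur triples `(x, y, z) ∈ [n]³` with `x + y = z`
under the block coloring `R^s B^(t-s) R^(n-t)` of `[n] = {1, …, n}`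
(an integer `i ∈ [n]` is red iff `i ≤ s` or `t < i`, blue otherwise). -/
def mstCount (n s t : ℕ) : ℕ :=
  ((Finset.Icc 1 n ×ˢ Finset.Icc 1 n ×ˢ Finset.Icc 1 n).filter
    (fun p => p.1 + p.2.1 = p.2.2 ∧
      (((p.1 ≤ s ∨ t < p.1) ∧ (p.2.1 ≤ s ∨ t < p.2.1) ∧ (p.2.2 ≤ s ∨ t < p.2.2)) ∨
       ((s < p.1 ∧ p.1 ≤ t) ∧ (s < p.2.1 ∧ p.2.1 ≤ t) ∧ (s < p.2.2 ∧ p.2.2 ≤ t))))).card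

/-!
In the given range of `s` and `t` the monochromatic Schur triples fall into four triangles, so that
`M(n,s,t) = C(s,2) + 2 C(n-t,2) + C(t-2s,2)`. Moving from `(s₀, t₀)` to `(s, t) = (s₀ + x, t₀ - y)`
changes `2M` by `3x² + y² + 2(x + y)² + αx + βy`, where `α` and `β` depend on `n`, `s₀` and `t₀`
only. Because the quadratic part is a nonnegative combination of `x²`, `y²` and `(x + y)²`, this is
nonnegative on all of `ℤ²` as soon as it is nonnegative at the six points `±(1,0)`, `±(0,1)`,
`±(1,-1)`, which means `|α| ≤ 5`, `|β| ≤ 3` and `|α - β| ≤ 4`. The rounding in `s₀` and `t₀` is such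
that these bounds hold.
-/

section QuadraticForm

theorem mul_sq_add_mul_nonneg_of_abs_le {p b : ℤ} (h : |b| ≤ p) (x : ℤ) :
    0 ≤ p * x ^ 2 + b * x := by
  have abs_le_sq : |x| ≤ x ^ 2 := by simpa using Int.natAbs_le_self_sq x
  have abs_mul_le : |b * x| ≤ p * x ^ 2 := by
    rw [abs_mul]
    exact mul_le_mul h abs_le_sq (abs_nonneg x) ((abs_nonneg b).trans h)
  linarith [neg_abs_le (b * x)]

theorem exists_abs_le_and_abs_sub_le {p q r α β : ℤ} (hp : 0 ≤ p) (hq : 0 ≤ q) (hr : 0 ≤ r)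
    (hα : |α| ≤ p + r) (hβ : |β| ≤ q + r) (hαβ : |α - β| ≤ p + q) :
    ∃ c, |c| ≤ r ∧ |α - c| ≤ p ∧ |β - c| ≤ q := by
  simp only [abs_le] at *
  -- Three pairwise intersecting intervals all contain their largest left endpoint.
  exact ⟨max (-r) (max (α - p) (β - q)), by omega, by omega, by omega⟩

theorem quadratic_nonneg_of_abs_le {p q r α β : ℤ} (hp : 0 ≤ p) (hq : 0 ≤ q) (hr : 0 ≤ r)
    (hα : |α| ≤ p + r) (hβ : |β| ≤ q + r) (hαβ : |α - β| ≤ p + q) (x y : ℤ) :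
    0 ≤ p * x ^ 2 + q * y ^ 2 + r * (x + y) ^ 2 + α * x + β * y := by
  obtain ⟨c, hc, hαc, hβc⟩ := exists_abs_le_and_abs_sub_le hp hq hr hα hβ hαβ
  calc
    0 ≤ (p * x ^ 2 + (α - c) * x) + (q * y ^ 2 + (β - c) * y) + (r * (x + y) ^ 2 + c * (x + y)) :=
      add_nonneg (add_nonneg (mul_sq_add_mul_nonneg_of_abs_le hαc x)
        (mul_sq_add_mul_nonneg_of_abs_le hβc y)) (mul_sq_add_mul_nonneg_of_abs_le hc (x + y))
    _ = p * x ^ 2 + q * y ^ 2 + r * (x + y) ^ 2 + α * x + β * y := by ring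

end QuadraticForm

section Counting

/-- The Schur triples `(x, y, z)` with `a < x`, `b < y` and `z ≤ c`. The monochromatic triples with
each entry in a prescribed block of a block coloring form such a set. -/
def schurTriangle (a b c : ℕ) : Finset (ℕ × ℕ × ℕ) :=
  {p ∈ Finset.Ioc a c ×ˢ Finset.Ioc b c ×ˢ Finset.Iic c | p.1 + p.2.1 = p.2.2}

theorem mem_schurTriangle {a b c x y z : ℕ} :
    (x, y, z) ∈ schurTriangle a b c ↔ a < x ∧ b < y ∧ z ≤ c ∧ x + y = z := by
  simp only [schurTriangle, Finset.mem_filter, Finset.mem_product, Finset.mem_Ioc, Finset.mem_Iic]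
  omega

theorem card_schurTriangle (a b c : ℕ) :
    (schurTriangle a b c).card = (c - a - b).choose 2 := by
  have card_eq : (schurTriangle a b c).card
      = ((Finset.range (c - a - b)).sigma fun j ↦ Finset.range j).card := by
    refine Finset.card_nbij' (fun p ↦ ⟨p.2.2 - a - b - 1, p.1 - a - 1⟩)
      (fun q ↦ (a + 1 + q.2, b + (q.1 - q.2), a + b + 1 + q.1)) ?_ ?_ ?_ ?_
    · rintro ⟨x, y, z⟩ h
      simp only [Finset.mem_coe, mem_schurTriangle, Finset.mem_sigma, Finset.mem_range] at h ⊢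
      omega
    · rintro ⟨j, i⟩ h
      simp only [Finset.mem_coe, mem_schurTriangle, Finset.mem_sigma, Finset.mem_range] at h ⊢
      omega
    · rintro ⟨x, y, z⟩ h
      simp only [Finset.mem_coe, mem_schurTriangle, Prod.mk.injEq] at h ⊢
      omega
    · rintro ⟨j, i⟩ h
      simp only [Finset.mem_coe, Finset.mem_sigma, Finset.mem_range, Sigma.mk.injEq,
        heq_eq_eq] at h ⊢
      omega
  rw [card_eq, Finset.card_sigma, Nat.choose_two_right]
  simp only [Finset.card_range]
  exact Finset.sum_range_id _

theorem disjoint_schurTriangle {a b c a' b' c' : ℕ}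
    (h : min c c' ≤ max a a' + max b b' + 1) :
    Disjoint (schurTriangle a b c) (schurTriangle a' b' c') := by
  rw [Finset.disjoint_left]
  rintro ⟨x, y, z⟩ hp hq
  rw [mem_schurTriangle] at hp hq
  omega

end Counting

section BlockColoring

variable {n s t : ℕ}

-- The slack `+ 1` in `hn` admits `(s₀, t₀)` for `n = 1` and `n = 2`, where `n - t₀ = s₀ + 1`.
theorem mstCount_eq_card_union (htn : t ≤ n) (h2s : 2 * s ≤ t) (hn : n ≤ s + t + 1) :
    mstCount n s t = (schurTriangle 0 0 s ∪ schurTriangle s s t ∪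
      (schurTriangle 0 t n ∪ schurTriangle t 0 n)).card := by
  unfold mstCount
  congr 1
  ext ⟨x, y, z⟩
  simp only [Finset.mem_filter, Finset.mem_product, Finset.mem_Icc, Finset.mem_union,
    mem_schurTriangle]
  omega

theorem mstCount_eq_sum_choose (htn : t ≤ n) (h2s : 2 * s ≤ t) (hn : n ≤ s + t + 1) :
    mstCount n s t = s.choose 2 + (t - 2 * s).choose 2 + 2 * (n - t).choose 2 := by
  have red_initial_disjoint_blue : Disjoint (schurTriangle 0 0 s) (schurTriangle s s t) :=
    disjoint_schurTriangle (by omega)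
  have red_final_disjoint : Disjoint (schurTriangle 0 t n) (schurTriangle t 0 n) :=
    disjoint_schurTriangle (by omega)
  have disjoint_red_final : Disjoint (schurTriangle 0 0 s ∪ schurTriangle s s t)
      (schurTriangle 0 t n ∪ schurTriangle t 0 n) := by
    simp only [Finset.disjoint_union_left, Finset.disjoint_union_right]
    refine ⟨⟨?_, ?_⟩, ?_, ?_⟩ <;> exact disjoint_schurTriangle (by omega)
  rw [mstCount_eq_card_union htn h2s hn, Finset.card_union_of_disjoint disjoint_red_final,
    Finset.card_union_of_disjoint red_initial_disjoint_blue,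
    Finset.card_union_of_disjoint red_final_disjoint]
  simp only [card_schurTriangle, Nat.sub_zero, Nat.sub_sub, two_mul]

theorem two_mul_mstCount (htn : t ≤ n) (h2s : 2 * s ≤ t) (hn : n ≤ s + t + 1) :
    2 * (mstCount n s t : ℤ) = s * (s - 1) + (t - 2 * s) * (t - 2 * s - 1)
      + 2 * ((n - t) * (n - t - 1)) := by
  have mstCount_eq : (mstCount n s t : ℚ) = s * (s - 1) / 2
      + (t - 2 * s) * (t - 2 * s - 1) / 2 + 2 * ((n - t) * (n - t - 1) / 2) := by
    rw [mstCount_eq_sum_choose htn h2s hn]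
    push_cast [Nat.cast_choose_two, Nat.cast_sub htn, Nat.cast_sub h2s]
    rfl
  qify
  linarith

variable {s₀ t₀ : ℕ}

/-- The three absolute values compare `(s₀, t₀)` with its translates by `±(1, 0)`, `±(0, 1)` and
`±(1, 1)`, respectively, so local optimality implies global optimality. -/
theorem mstCount_le_mstCount_of_abs_le (htn₀ : t₀ ≤ n) (h2s₀ : 2 * s₀ ≤ t₀)
    (hn₀ : n ≤ s₀ + t₀ + 1) (htn : t ≤ n) (h2s : 2 * s ≤ t) (hn : n ≤ s + t + 1)
    (hα : |(10 * s₀ - 4 * t₀ + 1 : ℤ)| ≤ 5) (hβ : |(4 * n + 4 * s₀ - 6 * t₀ - 1 : ℤ)| ≤ 3)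
    (hαβ : |(6 * s₀ + 2 * t₀ - 4 * n + 2 : ℤ)| ≤ 4) :
    mstCount n s₀ t₀ ≤ mstCount n s t := by
  have increment_nonneg := quadratic_nonneg_of_abs_le (p := 3) (q := 1) (r := 2)
    (by norm_num) (by norm_num) (by norm_num) hα hβ (by ring_nf at hαβ ⊢; exact hαβ)
    (s - s₀ : ℤ) (t₀ - t : ℤ)
  have count_eq : 2 * (mstCount n s t : ℤ) = 2 * mstCount n s₀ t₀ +
      (3 * (s - s₀) ^ 2 + 1 * (t₀ - t) ^ 2 + 2 * (s - s₀ + (t₀ - t)) ^ 2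
        + (10 * s₀ - 4 * t₀ + 1) * (s - s₀) + (4 * n + 4 * s₀ - 6 * t₀ - 1) * (t₀ - t)) := by
    rw [two_mul_mstCount htn h2s hn, two_mul_mstCount htn₀ h2s₀ hn₀]
    ring
  zify
  linarith

end BlockColoring

theorem floor_minimizer_bounds (n : ℕ) :
    let s₀ := (4 * n + 2) / 11
    let t₀ := 10 * n / 11
    t₀ ≤ n ∧ 2 * s₀ ≤ t₀ ∧ n ≤ s₀ + t₀ + 1 ∧
      |(10 * s₀ - 4 * t₀ + 1 : ℤ)| ≤ 5 ∧ |(4 * n + 4 * s₀ - 6 * t₀ - 1 : ℤ)| ≤ 3 ∧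
      |(6 * s₀ + 2 * t₀ - 4 * n + 2 : ℤ)| ≤ 4 := by
  intro s₀ t₀
  obtain ⟨k, r, hr, rfl⟩ : ∃ k r, r < 11 ∧ n = 11 * k + r :=
    ⟨n / 11, n % 11, Nat.mod_lt n (by norm_num), (Nat.div_add_mod n 11).symm⟩
  have hs₀ : s₀ = 4 * k + (4 * r + 2) / 11 := by omega
  have ht₀ : t₀ = 10 * k + 10 * r / 11 := by omega
  simp only [abs_le]
  interval_cases r <;> omega

/-- With `s₀ = ⌊(4n+2)/11⌋` and `t₀ = ⌊10n/11⌋`, the pair `(s₀, t₀)` minimizes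
`M(n,s,t)` among all `0 ≤ s ≤ t ≤ n` with `t ≥ 2s` and `s ≥ n - t`. -/
theorem block_coloring_minimizer (n : ℕ) (s t : ℕ) (hst : s ≤ t) (htn : t ≤ n)
    (h2s : 2 * s ≤ t) (hnt : n - t ≤ s) :
    mstCount n ((4 * n + 2) / 11) (10 * n / 11) ≤ mstCount n s t := by
  obtain ⟨htn₀, h2s₀, hn₀, hα, hβ, hαβ⟩ := floor_minimizer_bounds n
  exact mstCount_le_mstCount_of_abs_le htn₀ h2s₀ hn₀ htn h2s (by omega) hα hβ hαβ
end

section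
/- Let α₈ be the unique real root of a³ + a² − 3 in the interval [1,2] (α₈ ≈ 1.174559). For every real a with 1 ≤ a ≤ α₈ and all real s, t with 0 ≤ s ≤ t ≤ 1, the area A(s,t,a) satisfies A(s,t,a) ≥ (a⁴ − a² − 2a + 4)/(2a(a⁴ + 2a³ + 3a² + 2a + 3)), and equality holds at s₀ = (a+1)²/(a⁴ + 2a³ + 3a² + 2a + 3), t₀ = (a+1)(a² + 2a + 2)/(a⁴ + 2a³ + 3a² + 2a + 3). -/
/-- The area `A(s,t,a)` of the region
`Ω = {(x,y) : (x, y, x+ay) ∈ ([0,s] ∪ (t,1])³ ∨ (x, y, x+ay) ∈ (s,t]³}`,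
measuring the asymptotic proportion of monochromatic generalized Schur triples
under the block coloring with red blocks `[0,s]`, `(t,1]` and blue block `(s,t]`. -/
noncomputable def areaA (a s t : ℝ) : ℝ :=
  (MeasureTheory.volume {p : ℝ × ℝ |
    ((p.1 ∈ Set.Icc 0 s ∪ Set.Ioc t 1) ∧ (p.2 ∈ Set.Icc 0 s ∪ Set.Ioc t 1) ∧
      (p.1 + a * p.2 ∈ Set.Icc 0 s ∪ Set.Ioc t 1)) ∨
    (p.1 ∈ Set.Ioc s t ∧ p.2 ∈ Set.Ioc s t ∧ p.1 + a * p.2 ∈ Set.Ioc s t)}).toReal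

/-!
Up to null sets the admissible pairs `(x, y)` form the triangle `0 < x`, `0 < y`, `x + a y ≤ 1`.
Inclusion-exclusion expresses the measure of the points of a set that lie in all or in none of
three subsets through the subsets and their pairwise intersections only. For the blue conditions on
`x`, `y` and `x + a y` these are combinations of similar right triangles, so `2 a A(s,t,a)` is a
signed sum of squares of positive parts of affine functions of `(s, t)`.

The minimum is the critical value of the quadratic polynomial that this sum equals on the cell
`a s ≤ t`, `(1 + a) s ≤ 1 ≤ t + a s`, `a t ≤ 1`; the critical point satisfies `a t₀ ≤ 1` exactly
when `a ^ 3 + a ^ 2 ≤ 3`. On the larger region `a s ≤ t`, `(1 + a) s ≤ 1 ≤ s + a t`, the square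
`(1 - a t)⁺ ^ 2` is replaced by its tangent line at `t₀` and `(1 - t - a s)⁺ ^ 2` is absorbed by the
squared distance to the critical point. Elsewhere the sum is at least `1 / ((1 + a) ^ 2 + 1)`, which
is not smaller than the critical value.
-/

open MeasureTheory Set

theorem measureReal_inter_inter_union_compl {Ω : Type*} [MeasurableSpace Ω] (μ : Measure Ω)
    [IsFiniteMeasure μ] {X Y Z : Set Ω} (hX : MeasurableSet X) (hY : MeasurableSet Y)
    (hZ : MeasurableSet Z) :
    μ.real (X ∩ Y ∩ Z ∪ (X ∪ Y ∪ Z)ᶜ) =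
      μ.real univ - μ.real X - μ.real Y - μ.real Z
        + μ.real (X ∩ Y) + μ.real (X ∩ Z) + μ.real (Y ∩ Z) := by
  have hdisj : Disjoint (X ∩ Y ∩ Z) (X ∪ Y ∪ Z)ᶜ :=
    disjoint_compl_right_iff_subset.2 fun _ hx => Or.inr hx.2
  have hXY := measureReal_union_add_inter (μ := μ) (s := X) hY
  have hXYZ := measureReal_union_add_inter (μ := μ) (s := X ∪ Y) hZ
  have hXZYZ := measureReal_union_add_inter (μ := μ) (s := X ∩ Z) (hY.inter hZ)
  rw [union_inter_distrib_right] at hXYZ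
  rw [← inter_inter_distrib_right] at hXZYZ
  rw [measureReal_union hdisj ((hX.union hY).union hZ).compl,
    measureReal_compl ((hX.union hY).union hZ)]
  linarith

section CornerTriangle

/-- The triangle cut off by the line `x + a * y = r` from the quadrant with corner `(p, q)`. Its
sides on the quadrant are excluded and its hypotenuse is included, so that differences of such
triangles are cut out by half-open intervals. -/
def cornerTriangle (a p q r : ℝ) : Set (ℝ × ℝ) :=
  {z | p < z.1 ∧ q < z.2 ∧ z.1 + a * z.2 ≤ r}

variable {a p q r p' q' r' : ℝ}

theorem measurableSet_cornerTriangle : MeasurableSet (cornerTriangle a p q r) :=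
  (measurableSet_lt measurable_const measurable_fst).inter <|
    (measurableSet_lt measurable_const measurable_snd).inter <|
      measurableSet_le (f := fun z : ℝ × ℝ => z.1 + a * z.2) (by fun_prop) measurable_const

theorem cornerTriangle_subset (hp : p' ≤ p) (hq : q' ≤ q) (hr : r ≤ r') :
    cornerTriangle a p q r ⊆ cornerTriangle a p' q' r' :=
  fun _ hz => ⟨hp.trans_lt hz.1, hq.trans_lt hz.2.1, hz.2.2.trans hr⟩

theorem cornerTriangle_eq_empty (ha : 0 ≤ a) (h : r ≤ p + a * q) :
    cornerTriangle a p q r = ∅ := by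
  refine eq_empty_of_forall_notMem fun z ⟨hp, hq, hr⟩ => ?_
  linarith [mul_le_mul_of_nonneg_left hq.le ha]

theorem fst_preimage_Ioc_inter_cornerTriangle (hp : p ≤ p') (p'' : ℝ) :
    Prod.fst ⁻¹' Ioc p' p'' ∩ cornerTriangle a p q r =
      cornerTriangle a p' q r \ cornerTriangle a p'' q r := by
  ext z
  simp only [cornerTriangle, mem_inter_iff, mem_preimage, mem_Ioc, mem_sdiff, mem_ofPred_eq]
  grind

theorem snd_preimage_Ioc_inter_cornerTriangle (hq : q ≤ q') (q'' : ℝ) :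
    Prod.snd ⁻¹' Ioc q' q'' ∩ cornerTriangle a p q r =
      cornerTriangle a p q' r \ cornerTriangle a p q'' r := by
  ext z
  simp only [cornerTriangle, mem_inter_iff, mem_preimage, mem_Ioc, mem_sdiff, mem_ofPred_eq]
  grind

theorem add_mul_preimage_Ioc_inter_cornerTriangle (hr : r' ≤ r) (r'' : ℝ) :
    (fun z : ℝ × ℝ => z.1 + a * z.2) ⁻¹' Ioc r'' r' ∩ cornerTriangle a p q r =
      cornerTriangle a p q r' \ cornerTriangle a p q r'' := by
  ext z
  simp only [cornerTriangle, mem_inter_iff, mem_preimage, mem_Ioc, mem_sdiff, mem_ofPred_eq]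
  grind

theorem fst_add_mul_preimage_Ioc_inter_cornerTriangle (ha : 0 ≤ a) {s t : ℝ} (hp : p ≤ s)
    (hq : 0 ≤ q) (hr : t ≤ r) :
    Prod.fst ⁻¹' Ioc s t ∩ (fun z => z.1 + a * z.2) ⁻¹' Ioc s t ∩ cornerTriangle a p q r =
      cornerTriangle a s q t := by
  have hempty (u : ℝ) : cornerTriangle a u q u = ∅ :=
    cornerTriangle_eq_empty ha (le_add_of_nonneg_right (mul_nonneg ha hq))
  simp only [inter_assoc, add_mul_preimage_Ioc_inter_cornerTriangle hr, inter_sdiff_distrib_left,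
    fst_preimage_Ioc_inter_cornerTriangle hp, hempty, sdiff_empty, empty_sdiff]

theorem snd_add_mul_preimage_Ioc_inter_cornerTriangle (ha : 1 ≤ a) {s t : ℝ} (hp : 0 ≤ p)
    (hs : 0 ≤ s) (ht : 0 ≤ t) (hq : q ≤ s) (hr : t ≤ r) :
    Prod.snd ⁻¹' Ioc s t ∩ (fun z => z.1 + a * z.2) ⁻¹' Ioc s t ∩ cornerTriangle a p q r =
      cornerTriangle a p s t := by
  have hempty {u : ℝ} (hu : 0 ≤ u) : cornerTriangle a p u u = ∅ :=
    cornerTriangle_eq_empty (zero_le_one.trans ha)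
      (le_add_of_nonneg_of_le hp (le_mul_of_one_le_left hu ha))
  simp only [inter_assoc, add_mul_preimage_Ioc_inter_cornerTriangle hr, inter_sdiff_distrib_left,
    snd_preimage_Ioc_inter_cornerTriangle hq, hempty hs, hempty ht, sdiff_empty, empty_sdiff]

theorem volume_mk_preimage_cornerTriangle (ha : 0 < a) (x : ℝ) :
    volume (Prod.mk x ⁻¹' cornerTriangle a p q r) =
      (Ioc p (r - a * q)).indicator (fun x => ENNReal.ofReal ((r - a * q - x) / a)) x := by
  have hslice : Prod.mk x ⁻¹' cornerTriangle a p q r =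
      if p < x then Ioc q ((r - x) / a) else ∅ := by
    ext y
    split_ifs with hpx <;>
      simp [cornerTriangle, hpx, le_div_iff₀ ha, le_sub_iff_add_le', mul_comm y a]
  rw [hslice, indicator_apply]
  split_ifs with hpx hx hx
  · rw [Real.volume_Ioc, div_sub' ha.ne', sub_right_comm]
  · rw [Real.volume_Ioc, ENNReal.ofReal_eq_zero, sub_nonpos, div_le_iff₀ ha]
    grind
  · exact absurd hx.1 hpx
  · exact measure_empty

theorem volume_cornerTriangle (ha : 0 < a) :
    volume (cornerTriangle a p q r) = ENNReal.ofReal ((r - p - a * q)⁺ ^ 2 / (2 * a)) := by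
  rw [Measure.volume_eq_prod, Measure.prod_apply measurableSet_cornerTriangle]
  simp_rw [volume_mk_preimage_cornerTriangle ha]
  rw [lintegral_indicator measurableSet_Ioc, sub_right_comm]
  generalize r - a * q = b
  rcases le_total b p with h | h
  · simp [Ioc_eq_empty_of_le h, posPart_eq_zero.2 (sub_nonpos.2 h)]
  · have hnonneg : ∀ x ∈ Ioc p b, 0 ≤ (b - x) / a := fun x hx =>
      div_nonneg (sub_nonneg.2 hx.2) ha.le
    have hintegral : ∫ x in p..b, (b - x) / a = (b - p) ^ 2 / (2 * a) := by
      rw [intervalIntegral.integral_div, intervalIntegral.integral_comp_sub_left (fun x => x),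
        integral_id, sub_self]
      ring
    rw [← ofReal_integral_eq_lintegral_ofReal (Continuous.integrableOn_Ioc (by fun_prop))
        (ae_restrict_of_forall_mem measurableSet_Ioc hnonneg),
      ← intervalIntegral.integral_of_le h, hintegral, posPart_eq_self.2 (sub_nonneg.2 h)]

theorem volume_cornerTriangle_ne_top (ha : 0 < a) : volume (cornerTriangle a p q r) ≠ ⊤ := by
  rw [volume_cornerTriangle ha]
  exact ENNReal.ofReal_ne_top

theorem volumeReal_cornerTriangle (ha : 0 < a) :
    volume.real (cornerTriangle a p q r) = (r - p - a * q)⁺ ^ 2 / (2 * a) := by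
  rw [measureReal_def, volume_cornerTriangle ha, ENNReal.toReal_ofReal (by positivity)]

theorem volumeReal_cornerTriangle_sdiff (ha : 0 < a) (hp : p' ≤ p) (hq : q' ≤ q) (hr : r ≤ r') :
    volume.real (cornerTriangle a p' q' r' \ cornerTriangle a p q r) =
      (r' - p' - a * q')⁺ ^ 2 / (2 * a) - (r - p - a * q)⁺ ^ 2 / (2 * a) := by
  rw [measureReal_sdiff (cornerTriangle_subset hp hq hr) measurableSet_cornerTriangle
      (volume_cornerTriangle_ne_top ha),
    volumeReal_cornerTriangle ha, volumeReal_cornerTriangle ha]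

theorem volumeReal_fst_snd_preimage_Ioc_inter_cornerTriangle (ha : 0 < a) (hp : p ≤ p')
    (hq : q ≤ q') {p'' q'' : ℝ} (hp' : p' ≤ p'') (hq' : q' ≤ q'') :
    volume.real (Prod.fst ⁻¹' Ioc p' p'' ∩ Prod.snd ⁻¹' Ioc q' q'' ∩ cornerTriangle a p q r) =
      ((r - p' - a * q')⁺ ^ 2 - (r - p'' - a * q')⁺ ^ 2
        - (r - p' - a * q'')⁺ ^ 2 + (r - p'' - a * q'')⁺ ^ 2) / (2 * a) := by
  have hsubset : Prod.fst ⁻¹' Ioc p' p'' ∩ cornerTriangle a p q'' r ⊆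
      Prod.fst ⁻¹' Ioc p' p'' ∩ cornerTriangle a p q' r :=
    inter_subset_inter_right _ (cornerTriangle_subset le_rfl hq' le_rfl)
  rw [inter_assoc, snd_preimage_Ioc_inter_cornerTriangle hq, inter_sdiff_distrib_left,
    measureReal_sdiff hsubset
      ((measurable_fst measurableSet_Ioc).inter measurableSet_cornerTriangle)
      (measure_ne_top_of_subset inter_subset_right (volume_cornerTriangle_ne_top ha)),
    fst_preimage_Ioc_inter_cornerTriangle hp, fst_preimage_Ioc_inter_cornerTriangle hp,
    volumeReal_cornerTriangle_sdiff ha hp' le_rfl le_rfl,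
    volumeReal_cornerTriangle_sdiff ha hp' le_rfl le_rfl]
  ring

end CornerTriangle

/-- `2 * a` times the area `areaA a s t` in closed form, for `1 ≤ a` and `0 ≤ s ≤ t ≤ 1`. The terms
in the inner parentheses come from the points whose two coordinates are both blue. -/
noncomputable def normalizedArea (a s t : ℝ) : ℝ :=
  (1 - (t - s)) ^ 2 - (1 - a * s)⁺ ^ 2 + (1 - a * t)⁺ ^ 2 + (t - a * s)⁺ ^ 2
    + ((1 - s - a * s)⁺ ^ 2 - (1 - t - a * s)⁺ ^ 2
      - (1 - s - a * t)⁺ ^ 2 + (1 - t - a * t)⁺ ^ 2)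

section Area

variable {a s t : ℝ}

theorem mem_Icc_union_Ioc_iff_notMem_Ioc {b c u : ℝ} (hb : b ≤ u) (hc : u ≤ c) :
    u ∈ Icc b s ∪ Ioc t c ↔ u ∉ Ioc s t := by
  simp only [mem_union, mem_Icc, mem_Ioc]
  grind

theorem areaA_eq_restrict_cornerTriangle (ha : 1 ≤ a) (hs : 0 ≤ s) (hst : s ≤ t) (ht : t ≤ 1) :
    areaA a s t = (volume.restrict (cornerTriangle a 0 0 1)).real
      (Prod.fst ⁻¹' Ioc s t ∩ Prod.snd ⁻¹' Ioc s t ∩ (fun z => z.1 + a * z.2) ⁻¹' Ioc s t ∪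
        (Prod.fst ⁻¹' Ioc s t ∪ Prod.snd ⁻¹' Ioc s t ∪
          (fun z => z.1 + a * z.2) ⁻¹' Ioc s t)ᶜ) := by
  rw [measureReal_restrict_apply' measurableSet_cornerTriangle, areaA, ← measureReal_def]
  refine measureReal_congr (Filter.eventuallyEq_set.2 ?_)
  have hfst : ∀ᵐ z : ℝ × ℝ, z.1 ≠ 0 :=
    Measure.quasiMeasurePreserving_fst.ae (Measure.ae_ne volume 0)
  have hsnd : ∀ᵐ z : ℝ × ℝ, z.2 ≠ 0 :=
    Measure.quasiMeasurePreserving_snd.ae (Measure.ae_ne volume 0)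
  filter_upwards [hfst, hsnd] with ⟨x, y⟩ hx hy
  by_cases hxy : (x, y) ∈ cornerTriangle a 0 0 1
  · have ⟨hx0, hy0, hxy1⟩ : 0 < x ∧ 0 < y ∧ x + a * y ≤ 1 := hxy
    have hyay : y ≤ a * y := le_mul_of_one_le_left hy0.le ha
    have hx_red : x ∈ Icc 0 s ∪ Ioc t 1 ↔ x ∉ Ioc s t :=
      mem_Icc_union_Ioc_iff_notMem_Ioc hx0.le (by linarith)
    have hy_red : y ∈ Icc 0 s ∪ Ioc t 1 ↔ y ∉ Ioc s t :=
      mem_Icc_union_Ioc_iff_notMem_Ioc hy0.le (by linarith)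
    have hxy_red : x + a * y ∈ Icc 0 s ∪ Ioc t 1 ↔ x + a * y ∉ Ioc s t :=
      mem_Icc_union_Ioc_iff_notMem_Ioc (by linarith) hxy1
    simp only [hx_red, hy_red, hxy_red, mem_inter_iff, mem_union, mem_compl_iff, mem_preimage, hxy,
      and_true]
    tauto
  · refine iff_of_false (fun hΩ => hxy ?_) fun h => hxy h.2
    simp only [mem_union, mem_Icc, mem_Ioc] at hΩ
    change 0 < x ∧ 0 < y ∧ x + a * y ≤ 1
    grind

theorem areaA_eq_normalizedArea_div (ha : 1 ≤ a) (hs : 0 ≤ s) (hst : s ≤ t) (ht : t ≤ 1) :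
    areaA a s t = normalizedArea a s t / (2 * a) := by
  have ha0 : 0 < a := one_pos.trans_le ha
  have ht0 : 0 ≤ t := hs.trans hst
  have : IsFiniteMeasure (volume.restrict (cornerTriangle a 0 0 1)) :=
    isFiniteMeasure_restrict.2 (volume_cornerTriangle_ne_top ha0)
  rw [areaA_eq_restrict_cornerTriangle ha hs hst ht,
    measureReal_inter_inter_union_compl _ (measurable_fst measurableSet_Ioc)
      (measurable_snd measurableSet_Ioc) (measurableSet_Ioc.preimage (by fun_prop)),
    measureReal_restrict_apply_univ]
  simp only [measureReal_restrict_apply' measurableSet_cornerTriangle,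
    fst_add_mul_preimage_Ioc_inter_cornerTriangle ha0.le hs le_rfl ht,
    snd_add_mul_preimage_Ioc_inter_cornerTriangle ha le_rfl hs ht0 hs ht,
    fst_preimage_Ioc_inter_cornerTriangle hs, snd_preimage_Ioc_inter_cornerTriangle hs,
    add_mul_preimage_Ioc_inter_cornerTriangle ht, volumeReal_cornerTriangle ha0,
    volumeReal_cornerTriangle_sdiff ha0 hst le_rfl le_rfl,
    volumeReal_cornerTriangle_sdiff ha0 le_rfl hst le_rfl,
    volumeReal_cornerTriangle_sdiff ha0 le_rfl le_rfl hst,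
    volumeReal_fst_snd_preimage_Ioc_inter_cornerTriangle ha0 hs hs hst hst, mul_zero, sub_zero,
    posPart_eq_self.2 hs, posPart_eq_self.2 ht0, posPart_eq_self.2 (zero_le_one' ℝ),
    posPart_eq_self.2 (sub_nonneg.2 hst), posPart_eq_self.2 (sub_nonneg.2 ht),
    posPart_eq_self.2 (sub_nonneg.2 (hst.trans ht)), normalizedArea]
  ring

end Area

section PosPart

theorem sq_posPart_add_two_mul_mul_sub_le (x y : ℝ) :
    x⁺ ^ 2 + 2 * x⁺ * (y - x) ≤ y⁺ ^ 2 := by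
  rcases le_total x 0 with hx | hx
  · rw [posPart_eq_zero.2 hx]
    linarith [sq_nonneg y⁺]
  · rw [posPart_eq_self.2 hx]
    nlinarith [sq_nonneg (y⁺ - x), mul_le_mul_of_nonneg_right (le_posPart y) hx]

theorem sq_posPart_add_sq_posPart_le {w x y z : ℝ} (hxw : x ≤ w) (hyw : y ≤ w)
    (h : w + z = x + y) : x⁺ ^ 2 + y⁺ ^ 2 ≤ w⁺ ^ 2 + z⁺ ^ 2 := by
  wlog hyx : y ≤ x generalizing x y
  · rw [add_comm (x⁺ ^ 2)]
    exact this hyw hxw (by rw [h, add_comm]) (le_of_not_ge hyx)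
  have hslope : 0 ≤ (x⁺ - y⁺) * (w - x) :=
    mul_nonneg (sub_nonneg.2 (posPart_mono hyx)) (sub_nonneg.2 hxw)
  have hz : z - y = -(w - x) := by linarith
  have hyz := sq_posPart_add_two_mul_mul_sub_le y z
  rw [hz] at hyz
  linarith [sq_posPart_add_two_mul_mul_sub_le x w]

end PosPart

section LowerBounds

variable {a s t : ℝ}

theorem le_normalizedArea_of_le (ha : 0 ≤ a) (hst : s ≤ t) :
    (1 - (t - s)) ^ 2 - (1 - a * s)⁺ ^ 2 + (1 - a * t)⁺ ^ 2 + (t - a * s)⁺ ^ 2 ≤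
      normalizedArea a s t := by
  have hast : a * s ≤ a * t := mul_le_mul_of_nonneg_left hst ha
  have hconvex : (1 - t - a * s)⁺ ^ 2 + (1 - s - a * t)⁺ ^ 2 ≤
      (1 - s - a * s)⁺ ^ 2 + (1 - t - a * t)⁺ ^ 2 :=
    sq_posPart_add_sq_posPart_le (by linarith) (by linarith) (by ring)
  rw [normalizedArea]
  linarith

theorem one_fifth_le_normalizedArea_of_le_mul (ha : 1 ≤ a) (ha' : a ≤ 6 / 5) (hst : s ≤ t)
    (ht : t ≤ 1) (hts : t ≤ a * s) : 1 / 5 ≤ normalizedArea a s t := by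
  have hgap : a * (t - s) ≤ (a - 1) * (a * s) := by nlinarith
  have hgap' : t - s ≤ 1 / 5 := by nlinarith
  have hdrop : (1 - a * s)⁺ ^ 2 - (1 - a * t)⁺ ^ 2 ≤ 1 / 10 := by
    have htangent := sq_posPart_add_two_mul_mul_sub_le (1 - a * s) (1 - a * t)
    rcases le_total (1 - a * s) 0 with has | has
    · rw [posPart_eq_zero.2 has]
      linarith [sq_nonneg (1 - a * t)⁺]
    · rw [posPart_eq_self.2 has] at htangent ⊢
      have hamgm : (1 - a * s) * (a * s) ≤ 1 / 4 := by nlinarith [sq_nonneg (a * s - 1 / 2)]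
      nlinarith [mul_le_mul_of_nonneg_left hgap has]
  have hsq : (4 / 5) ^ 2 ≤ (1 - (t - s)) ^ 2 :=
    pow_le_pow_left₀ (by norm_num) (by linarith only [hgap']) 2
  linarith [le_normalizedArea_of_le (zero_le_one.trans ha) hst, sq_nonneg (t - a * s)⁺]

theorem sq_le_normalizedArea_of_one_le_mul (ha : 0 ≤ a) (hst : s ≤ t) (ht : t ≤ 1)
    (hts : a * s ≤ t) (hs : 1 ≤ (1 + a) * s) : s ^ 2 ≤ normalizedArea a s t := by
  have hbound := le_normalizedArea_of_le ha hst
  rw [posPart_eq_self.2 (by linarith : 0 ≤ 1 - a * s),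
    posPart_eq_self.2 (sub_nonneg.2 hts)] at hbound
  have hcross : 0 ≤ (1 - t) * ((1 + a) * s - 1) := mul_nonneg (sub_nonneg.2 ht) (sub_nonneg.2 hs)
  nlinarith [sq_nonneg (1 - t), sq_nonneg (1 - a * t)⁺]

theorem normalizedArea_eq_of_add_mul_le_one (ha : 1 ≤ a) (hs : 0 ≤ s) (hts : a * s ≤ t)
    (hst1 : s + a * t ≤ 1) :
    normalizedArea a s t = t ^ 2 + (1 - (1 + a) * t)⁺ ^ 2
      + s * ((2 + 2 * a) - (2 + 6 * a) * t + (1 + 2 * a) * s) := by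
  have hst : s ≤ t := (le_mul_of_one_le_left hs ha).trans hts
  have hmul : 0 ≤ (a - 1) * (t - s) := mul_nonneg (sub_nonneg.2 ha) (sub_nonneg.2 hst)
  rw [normalizedArea, posPart_eq_self.2 (by nlinarith : 0 ≤ 1 - a * s),
    posPart_eq_self.2 (by linarith : 0 ≤ 1 - a * t), posPart_eq_self.2 (sub_nonneg.2 hts),
    posPart_eq_self.2 (by nlinarith : 0 ≤ 1 - s - a * s),
    posPart_eq_self.2 (by linarith : 0 ≤ 1 - t - a * s),
    posPart_eq_self.2 (by linarith : 0 ≤ 1 - s - a * t),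
    show 1 - t - a * t = 1 - (1 + a) * t by ring]
  ring

theorem one_div_le_normalizedArea_of_mul_le_one (ha : 1 ≤ a) (hs : 0 ≤ s) (hts : a * s ≤ t)
    (ht : (1 + a) * t ≤ 1) : 1 / ((1 + a) ^ 2 + 1) ≤ normalizedArea a s t := by
  have hst : s ≤ t := (le_mul_of_one_le_left hs ha).trans hts
  have hslope : 0 ≤ (2 + 2 * a) - (2 + 6 * a) * t := by
    have : 0 ≤ (1 + a) * ((2 + 2 * a) - (2 + 6 * a) * t) := by nlinarith
    exact nonneg_of_mul_nonneg_right this (by linarith)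
  have hcauchy : 1 / ((1 + a) ^ 2 + 1) ≤ t ^ 2 + (1 - (1 + a) * t) ^ 2 := by
    rw [div_le_iff₀ (by positivity)]
    nlinarith [sq_nonneg (((1 + a) ^ 2 + 1) * t - (1 + a))]
  rw [normalizedArea_eq_of_add_mul_le_one ha hs hts (by linarith),
    posPart_eq_self.2 (sub_nonneg.2 ht)]
  have : 0 ≤ s * ((2 + 2 * a) - (2 + 6 * a) * t + (1 + 2 * a) * s) := by positivity
  linarith

theorem one_div_le_normalizedArea_of_one_le_mul (ha : 1 ≤ a) (ha' : a ≤ 3 / 2) (hs : 0 ≤ s)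
    (hts : a * s ≤ t) (hst1 : s + a * t ≤ 1) (ht : 1 ≤ (1 + a) * t) :
    1 / ((1 + a) ^ 2 + 1) ≤ normalizedArea a s t := by
  have hP : 0 < (1 + a) ^ 2 + 1 := by positivity
  have hK : 0 < a * (3 + 2 * a) := by positivity
  have hpoly : a * (3 + 2 * a) ≤
      (2 * (a - 1) ^ 2 * (2 * a + 1) * (2 / 5) + 2 * (2 * a - 1) - a ^ 3) * ((1 + a) ^ 2 + 1) := by
    obtain ⟨u, hu, rfl⟩ : ∃ u, 0 ≤ u ∧ a = 1 + u := ⟨a - 1, by linarith, by ring⟩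
    have : 0 ≤ 2 * u + 8 / 5 * u ^ 3 + 9 / 5 * u ^ 4 + 3 / 5 * u ^ 5 := by positivity
    linear_combination this
  have ht' : 2 / 5 ≤ t := by nlinarith
  -- After multiplication by `a * (3 + 2 * a)`, the area is the sum of the square `hsquare` in `s`,
  -- the products `hcross` and `hslack`, and a function affine in `t`.
  have hcross : 0 ≤ (2 * a - 1) * ((1 - a * t) * ((1 + a) * t - 1)) :=
    mul_nonneg (by linarith) (mul_nonneg (by linarith) (by linarith))
  have hslack : 0 ≤ a * (3 + 2 * a) * (s * (1 - s - a * t)) :=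
    mul_nonneg (by positivity) (mul_nonneg hs (by linarith))
  have hlinear : (a - 1) ^ 2 * (2 * a + 1) * (2 / 5) ≤ (a - 1) ^ 2 * (2 * a + 1) * t := by gcongr
  have hsquare : 0 ≤ a * ((3 + 2 * a) * s - ((1 + 2 * a) * t - a)) ^ 2 := by positivity
  rw [normalizedArea_eq_of_add_mul_le_one ha hs hts hst1, posPart_eq_zero.2 (sub_nonpos.2 ht),
    div_le_iff₀ hP]
  refine le_of_mul_le_mul_left ?_ hK
  calc a * (3 + 2 * a) * 1
    _ ≤ (2 * (a - 1) ^ 2 * (2 * a + 1) * (2 / 5) + 2 * (2 * a - 1) - a ^ 3)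
          * ((1 + a) ^ 2 + 1) := by rwa [mul_one]
    _ ≤ a * (3 + 2 * a) * (t ^ 2 + 0 ^ 2 + s * ((2 + 2 * a) - (2 + 6 * a) * t + (1 + 2 * a) * s))
          * ((1 + a) ^ 2 + 1) := by
      gcongr
      linear_combination 2 * hcross + 2 * hslack + 2 * hlinear + hsquare
    _ = _ := by ring

end LowerBounds

section CriticalPoint

variable {a s t : ℝ}

theorem le_six_fifths_of_cube_add_sq_le_three (h : a ^ 3 + a ^ 2 ≤ 3) : a ≤ 6 / 5 := by
  contrapose! h
  have hsq : (6 / 5) ^ 2 ≤ a ^ 2 := by gcongr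
  have hcube : (6 / 5) ^ 3 ≤ a ^ 3 := by gcongr
  linarith

/-- The common denominator of the coordinates of the critical point. -/
def criticalDenom (a : ℝ) : ℝ := a ^ 4 + 2 * a ^ 3 + 3 * a ^ 2 + 2 * a + 3

/-- The endpoint `s₀` of the first red block in the optimal coloring. -/
noncomputable def criticalS (a : ℝ) : ℝ := (a + 1) ^ 2 / criticalDenom a

/-- The endpoint `t₀` of the blue block in the optimal coloring. -/
noncomputable def criticalT (a : ℝ) : ℝ := (a + 1) * (a ^ 2 + 2 * a + 2) / criticalDenom a

theorem criticalDenom_pos (a : ℝ) : 0 < criticalDenom a := by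
  have : criticalDenom a = (a ^ 2 + a + 1) ^ 2 + 2 := by
    rw [criticalDenom]
    ring
  rw [this]
  positivity

-- The next two equations are `∂/∂s = 0` and `∂/∂t = 0` for the quadratic polynomial of
-- `quadratic_eq_two_sub_mul_criticalT_add_sq`.
theorem mul_criticalS_eq_mul_criticalT (a : ℝ) :
    ((1 + a) ^ 2 + 1) * criticalS a = (1 + a) * criticalT a := by
  rw [criticalS, criticalT]
  ring

theorem mul_criticalT_sub_mul_criticalS (a : ℝ) :
    (a ^ 2 + 2) * criticalT a - (1 + a) * criticalS a = 1 + a := by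
  have hD := (criticalDenom_pos a).ne'
  rw [criticalS, criticalT]
  field_simp
  rw [criticalDenom]
  ring

theorem two_sub_mul_criticalT (a : ℝ) :
    2 - (1 + a) * criticalT a = (a ^ 4 - a ^ 2 - 2 * a + 4) / criticalDenom a := by
  have hD := (criticalDenom_pos a).ne'
  rw [criticalT]
  field_simp
  rw [criticalDenom]
  ring

theorem mul_criticalT_le_one (h : a ^ 3 + a ^ 2 ≤ 3) : a * criticalT a ≤ 1 := by
  rw [criticalT, ← mul_div_assoc, div_le_one (criticalDenom_pos a), criticalDenom]
  linear_combination h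

theorem criticalS_nonneg (a : ℝ) : 0 ≤ criticalS a :=
  div_nonneg (sq_nonneg _) (criticalDenom_pos a).le

theorem mul_criticalS_le_criticalT (ha : 0 ≤ a) : a * criticalS a ≤ criticalT a := by
  rw [criticalS, criticalT, ← mul_div_assoc, div_le_div_iff_of_pos_right (criticalDenom_pos a)]
  nlinarith

theorem criticalS_le_criticalT (ha : 1 ≤ a) : criticalS a ≤ criticalT a :=
  (le_mul_of_one_le_left (criticalS_nonneg a) ha).trans
    (mul_criticalS_le_criticalT (zero_le_one.trans ha))

theorem criticalT_le_one (ha : 1 ≤ a) (h : a ^ 3 + a ^ 2 ≤ 3) : criticalT a ≤ 1 :=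
  (le_mul_of_one_le_left ((criticalS_nonneg a).trans (criticalS_le_criticalT ha)) ha).trans
    (mul_criticalT_le_one h)

theorem one_add_mul_criticalS_le_one (ha : 1 ≤ a) : (1 + a) * criticalS a ≤ 1 := by
  rw [criticalS, ← mul_div_assoc, div_le_one (criticalDenom_pos a), criticalDenom]
  nlinarith [pow_nonneg (zero_le_one.trans ha) 3, one_le_pow₀ ha (n := 4)]

theorem sub_one_le_mul_criticalT_add_mul_criticalS_sub_one (ha : 1 ≤ a) (ha' : a ≤ 6 / 5) :
    a - 1 ≤ a * (criticalT a + a * criticalS a - 1) := by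
  have hD := criticalDenom_pos a
  have hquot : criticalT a + a * criticalS a - 1 =
      (-a ^ 4 + 2 * a ^ 2 + 3 * a - 1) / criticalDenom a := by
    rw [criticalS, criticalT]
    field_simp
    rw [criticalDenom]
    ring
  rw [hquot, ← mul_div_assoc, le_div_iff₀ hD, criticalDenom]
  have hcube : a ^ 3 ≤ (6 / 5) ^ 3 := by gcongr
  nlinarith [mul_nonneg (sub_nonneg.2 hcube) (sq_nonneg a)]

theorem two_sub_mul_criticalT_le_one_div (ha : 1 ≤ a) (ha' : a ≤ 6 / 5) :
    2 - (1 + a) * criticalT a ≤ 1 / ((1 + a) ^ 2 + 1) := by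
  rw [two_sub_mul_criticalT, div_le_div_iff₀ (criticalDenom_pos a) (by positivity), criticalDenom]
  obtain ⟨u, hu, rfl⟩ : ∃ u, 0 ≤ u ∧ a = 1 + u := ⟨a - 1, by linarith, by ring⟩
  have hu' : u ≤ 1 / 5 := by linarith
  have hpow (n : ℕ) : u ^ (n + 1) ≤ (1 / 5) ^ n * u := by
    rw [pow_succ]
    gcongr
  nlinarith [hpow 1, hpow 2, hpow 3, hpow 4, hpow 5]

theorem quadratic_eq_two_sub_mul_criticalT_add_sq (a s t : ℝ) :
    (1 - (t - s)) ^ 2 - (1 - a * s) ^ 2 + (1 - s - a * s) ^ 2 + (t - a * s) ^ 2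
        + ((1 - a * criticalT a) ^ 2
          + 2 * (1 - a * criticalT a) * ((1 - a * t) - (1 - a * criticalT a))) =
      2 - (1 + a) * criticalT a
        + ((1 + a) * (s - criticalS a) - (t - criticalT a)) ^ 2
        + ((s - criticalS a) ^ 2 + (t - criticalT a) ^ 2) := by
  linear_combination (2 * s - criticalS a) * mul_criticalS_eq_mul_criticalT a
    + (2 * t - criticalT a) * mul_criticalT_sub_mul_criticalS a

theorem sq_posPart_le_sq_dist_critical (ha : 1 ≤ a) (ha' : a ≤ 6 / 5) (hs : 0 ≤ s)
    (hst1 : 1 ≤ s + a * t) :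
    (1 - t - a * s)⁺ ^ 2 ≤ (s - criticalS a) ^ 2 + (t - criticalT a) ^ 2 := by
  rcases le_total (1 - t - a * s) 0 with hb | hb
  · rw [posPart_eq_zero.2 hb, zero_pow two_ne_zero]
    positivity
  rw [posPart_eq_self.2 hb]
  set b := 1 - t - a * s with hb_def
  set c := criticalT a + a * criticalS a - 1 with hc_def
  have hbc : b ≤ c := by
    have hab : a * b ≤ a - 1 := by
      rw [hb_def]
      linarith [le_mul_of_one_le_left hs (one_le_pow₀ ha (n := 2))]
    exact le_of_mul_le_mul_left
      (hab.trans (sub_one_le_mul_criticalT_add_mul_criticalS_sub_one ha ha')) (by linarith)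
  refine le_of_mul_le_mul_left ?_ (by positivity : 0 < 1 + a ^ 2)
  have ha_sq : a ^ 2 ≤ 3 := by nlinarith
  calc (1 + a ^ 2) * b ^ 2 ≤ (2 * b) ^ 2 := by nlinarith [sq_nonneg b]
    _ ≤ (b + c) ^ 2 := by gcongr; linarith
    _ = (a * (s - criticalS a) + (t - criticalT a)) ^ 2 := by rw [hb_def, hc_def]; ring
    _ ≤ (1 + a ^ 2) * ((s - criticalS a) ^ 2 + (t - criticalT a) ^ 2) := by
      nlinarith [sq_nonneg ((s - criticalS a) - a * (t - criticalT a))]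

theorem two_sub_mul_criticalT_le_normalizedArea_of_one_le_add_mul (ha : 1 ≤ a)
    (hcubic : a ^ 3 + a ^ 2 ≤ 3) (hs : 0 ≤ s) (hts : a * s ≤ t) (hs1 : (1 + a) * s ≤ 1)
    (hst1 : 1 ≤ s + a * t) :
    2 - (1 + a) * criticalT a ≤ normalizedArea a s t := by
  have hst : s ≤ t := (le_mul_of_one_le_left hs ha).trans hts
  have htangent := sq_posPart_add_two_mul_mul_sub_le (1 - a * criticalT a) (1 - a * t)
  have hdist :=
    sq_posPart_le_sq_dist_critical ha (le_six_fifths_of_cube_add_sq_le_three hcubic) hs hst1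
  rw [posPart_eq_self.2 (sub_nonneg.2 (mul_criticalT_le_one hcubic))] at htangent
  rw [normalizedArea, posPart_eq_self.2 (by linarith : 0 ≤ 1 - a * s),
    posPart_eq_self.2 (sub_nonneg.2 hts), posPart_eq_self.2 (by linarith : 0 ≤ 1 - s - a * s),
    posPart_eq_zero.2 (by linarith : 1 - s - a * t ≤ 0),
    posPart_eq_zero.2 (by linarith : 1 - t - a * t ≤ 0)]
  linarith [quadratic_eq_two_sub_mul_criticalT_add_sq a s t,
    sq_nonneg ((1 + a) * (s - criticalS a) - (t - criticalT a))]

theorem normalizedArea_critical (ha : 1 ≤ a) (hcubic : a ^ 3 + a ^ 2 ≤ 3) :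
    normalizedArea a (criticalS a) (criticalT a) = 2 - (1 + a) * criticalT a := by
  have ha' := le_six_fifths_of_cube_add_sq_le_three hcubic
  have hts := mul_criticalS_le_criticalT (zero_le_one.trans ha)
  have hs1 := one_add_mul_criticalS_le_one ha
  have hat := mul_criticalT_le_one hcubic
  have hst := criticalS_le_criticalT ha
  have hmul : 0 ≤ (a - 1) * (criticalT a - criticalS a) :=
    mul_nonneg (sub_nonneg.2 ha) (sub_nonneg.2 hst)
  have hb : 1 ≤ criticalT a + a * criticalS a := sub_nonneg.1 <| nonneg_of_mul_nonneg_right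
    ((sub_nonneg.2 ha).trans (sub_one_le_mul_criticalT_add_mul_criticalS_sub_one ha ha'))
    (zero_lt_one.trans_le ha)
  rw [normalizedArea, posPart_eq_self.2 (by linarith : 0 ≤ 1 - a * criticalS a),
    posPart_eq_self.2 (sub_nonneg.2 hat), posPart_eq_self.2 (sub_nonneg.2 hts),
    posPart_eq_self.2 (by linarith : 0 ≤ 1 - criticalS a - a * criticalS a),
    posPart_eq_zero.2 (by linarith : 1 - criticalT a - a * criticalS a ≤ 0),
    posPart_eq_zero.2 (by linarith : 1 - criticalS a - a * criticalT a ≤ 0),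
    posPart_eq_zero.2 (by linarith : 1 - criticalT a - a * criticalT a ≤ 0)]
  linear_combination quadratic_eq_two_sub_mul_criticalT_add_sq a (criticalS a) (criticalT a)

theorem two_sub_mul_criticalT_le_normalizedArea (ha : 1 ≤ a)
    (hcubic : a ^ 3 + a ^ 2 ≤ 3) (hs : 0 ≤ s) (hst : s ≤ t) (ht : t ≤ 1) :
    2 - (1 + a) * criticalT a ≤ normalizedArea a s t := by
  have ha' := le_six_fifths_of_cube_add_sq_le_three hcubic
  have hmin := two_sub_mul_criticalT_le_one_div ha ha'
  rcases le_total t (a * s) with hts | hts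
  · have : 1 / ((1 + a) ^ 2 + 1) ≤ 1 / 5 := one_div_le_one_div_of_le (by norm_num) (by nlinarith)
    exact (hmin.trans this).trans (one_fifth_le_normalizedArea_of_le_mul ha ha' hst ht hts)
  rcases le_total 1 ((1 + a) * s) with hs1 | hs1
  · have : 1 / ((1 + a) ^ 2 + 1) ≤ s ^ 2 := by
      rw [div_le_iff₀ (by positivity)]
      nlinarith
    exact (hmin.trans this).trans
      (sq_le_normalizedArea_of_one_le_mul (zero_le_one.trans ha) hst ht hts hs1)
  rcases le_total 1 (s + a * t) with hst1 | hst1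
  · exact two_sub_mul_criticalT_le_normalizedArea_of_one_le_add_mul ha hcubic hs hts hs1 hst1
  rcases le_total 1 ((1 + a) * t) with ht1 | ht1
  · exact hmin.trans (one_div_le_normalizedArea_of_one_le_mul ha (by linarith) hs hts hst1 ht1)
  · exact hmin.trans (one_div_le_normalizedArea_of_mul_le_one ha hs hts ht1)

end CriticalPoint

/-- For `1 ≤ a ≤ α₈` (the root of `a³ + a² − 3` in `[1,2]`), the minimum of
`A(s,t,a)` over `0 ≤ s ≤ t ≤ 1` is `(a⁴ − a² − 2a + 4)/(2a(a⁴+2a³+3a²+2a+3))`,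
attained at `s₀ = (a+1)²/(a⁴+2a³+3a²+2a+3)`,
`t₀ = (a+1)(a²+2a+2)/(a⁴+2a³+3a²+2a+3)`. -/
theorem area_min_middle_a (α : ℝ) (hα : α ∈ Set.Icc (1 : ℝ) 2)
    (hroot : α ^ 3 + α ^ 2 - 3 = 0) (a : ℝ) (ha1 : 1 ≤ a) (ha2 : a ≤ α) :
    (∀ s t : ℝ, 0 ≤ s → s ≤ t → t ≤ 1 →
      (a ^ 4 - a ^ 2 - 2 * a + 4) /
          (2 * a * (a ^ 4 + 2 * a ^ 3 + 3 * a ^ 2 + 2 * a + 3)) ≤ areaA a s t) ∧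
    areaA a ((a + 1) ^ 2 / (a ^ 4 + 2 * a ^ 3 + 3 * a ^ 2 + 2 * a + 3))
        ((a + 1) * (a ^ 2 + 2 * a + 2) / (a ^ 4 + 2 * a ^ 3 + 3 * a ^ 2 + 2 * a + 3)) =
      (a ^ 4 - a ^ 2 - 2 * a + 4) /
        (2 * a * (a ^ 4 + 2 * a ^ 3 + 3 * a ^ 2 + 2 * a + 3)) := by
  have hcubic : a ^ 3 + a ^ 2 ≤ 3 := calc
    a ^ 3 + a ^ 2 ≤ α ^ 3 + α ^ 2 := by gcongr
    _ = 3 := sub_eq_zero.1 hroot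
  have hmin : (a ^ 4 - a ^ 2 - 2 * a + 4) /
      (2 * a * (a ^ 4 + 2 * a ^ 3 + 3 * a ^ 2 + 2 * a + 3)) =
        (2 - (1 + a) * criticalT a) / (2 * a) := by
    rw [two_sub_mul_criticalT, div_div, mul_comm (criticalDenom a), criticalDenom]
  rw [hmin]
  constructor
  · intro s t hs hst ht
    rw [areaA_eq_normalizedArea_div ha1 hs hst ht]
    gcongr
    exact two_sub_mul_criticalT_le_normalizedArea ha1 hcubic hs hst ht
  · change areaA a (criticalS a) (criticalT a) = _
    rw [areaA_eq_normalizedArea_div ha1 (criticalS_nonneg a) (criticalS_le_criticalT ha1)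
        (criticalT_le_one ha1 hcubic), normalizedArea_critical ha1 hcubic]
end

section
/- Let α₆ = (√129 − 1)/16 (the positive root of 8a² + a − 4) and let α₇ be the unique real root of 7a³ − 5a − 1 in [0,1] (α₇ ≈ 0.931478). For every real a with α₆ ≤ a ≤ α₇ and all real s, t with 0 ≤ s ≤ t ≤ 1, the area A(s,t,a) satisfies A(s,t,a) ≥ (−2a² + 3a + 2)/(2(a+1)(7a+1)), and equality holds at s₀ = (2a+1)/(7a+1), t₀ = (8a² + 6a + 1)/(7a² + 8a + 1). -/
/-!
Slicing at height `y` writes `2 * a * areaA a s t` as one quadratic polynomial `baseQuad` plus a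
signed sum of squared positive parts of affine forms. The point `(s₀, t₀)` is the minimiser of
`baseQuad`, and `8 * a ^ 2 + a - 4 ≥ 0` and `7 * a ^ 3 - 5 * a - 1 ≤ 0` say exactly that
`1 - s - a * t` and `a - t` are nonpositive there, which makes every correction vanish.

For the lower bound, where only one of `(a - t)²` and `(1 - s - a * t)²` is subtracted, it is
dominated by the square of the linear part of its affine form centred at `(s₀, t₀)`, and `baseQuad`
minus that square is still positive definite. The regions where more is subtracted stay away from
`(s₀, t₀)`: there nonnegative multiples of products of the forms defining the region can be
subtracted so that a positive definite quadratic remains.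
-/

open MeasureTheory Set

variable {a s t : ℝ}

/-- The squared positive part `(u⁺)²`. Areas cut out by half-planes are combinations of such terms,
and it is `C¹` with derivative `2u⁺`. -/
noncomputable def sqPos (u : ℝ) : ℝ := max u 0 ^ 2

lemma sqPos_of_nonneg {u : ℝ} (hu : 0 ≤ u) : sqPos u = u ^ 2 := by
  rw [sqPos, max_eq_left hu]

lemma sqPos_of_nonpos {u : ℝ} (hu : u ≤ 0) : sqPos u = 0 := by
  rw [sqPos, max_eq_right hu, zero_pow two_ne_zero]

lemma sqPos_nonneg (u : ℝ) : 0 ≤ sqPos u := sq_nonneg _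

lemma sqPos_eq_sq_sub_sqPos {u v : ℝ} (huv : u + v = 0) : sqPos u = v ^ 2 - sqPos v := by
  obtain rfl : v = -u := by linarith
  rcases le_total u 0 with hu | hu
  · rw [sqPos_of_nonpos hu, sqPos_of_nonneg (neg_nonneg.2 hu), sub_self]
  · rw [sqPos_of_nonneg hu, sqPos_of_nonpos (neg_nonpos.2 hu), neg_sq, sub_zero]

-- The left-hand side is `x ^ 2 - (x - l) ^ 2`; unlike the right-hand side it is polynomial.
lemma mul_two_mul_sub_le_sqPos_sub_sqPos {x y l : ℝ} (hl : 0 ≤ l) (hlxy : l ≤ x - y) :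
    l * (2 * x - l) ≤ sqPos x - sqPos y := by
  rcases le_total y 0 with hy | hy
  · rw [sqPos_of_nonpos hy, sub_zero]
    rcases le_total x 0 with hx | hx
    · rw [sqPos_of_nonpos hx]
      exact mul_nonpos_of_nonneg_of_nonpos hl (by linarith)
    · rw [sqPos_of_nonneg hx]
      linarith [sq_nonneg (x - l)]
  · rw [sqPos_of_nonneg hy, sqPos_of_nonneg (by linarith)]
    nlinarith [pow_le_pow_left₀ hy (by linarith : y ≤ x - l) 2]

lemma sqPos_sub_sqPos_nonneg {x y : ℝ} (hyx : y ≤ x) : 0 ≤ sqPos x - sqPos y := by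
  simpa using mul_two_mul_sub_le_sqPos_sub_sqPos le_rfl (sub_nonneg.2 hyx)

lemma hasDerivAt_sqPos (u : ℝ) : HasDerivAt sqPos (2 * max u 0) u := by
  have deriv_ne_zero : ∀ v ≠ (0 : ℝ), HasDerivAt sqPos (2 * max v 0) v := by
    intro v hv
    rcases hv.lt_or_gt with hv | hv
    · rw [max_eq_right hv.le, mul_zero]
      refine (hasDerivAt_const v (0 : ℝ)).congr_of_eventuallyEq ?_
      filter_upwards [Iio_mem_nhds hv] with x hx using sqPos_of_nonpos (le_of_lt hx)
    · rw [max_eq_left hv.le]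
      have deriv_sq : HasDerivAt (fun x : ℝ => x ^ 2) (2 * v) v := by simpa using hasDerivAt_pow 2 v
      refine deriv_sq.congr_of_eventuallyEq ?_
      filter_upwards [Ioi_mem_nhds hv] with x hx using sqPos_of_nonneg (le_of_lt hx)
  have sqPos_continuous : Continuous sqPos := by unfold sqPos; fun_prop
  rcases eq_or_ne u 0 with rfl | hu
  · exact hasDerivAt_of_hasDerivAt_of_ne deriv_ne_zero sqPos_continuous.continuousAt
      (by fun_prop)
  · exact deriv_ne_zero u hu

lemma integral_max_add_mul {b : ℝ} (hb : b ≠ 0) (k p q : ℝ) :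
    ∫ y in p..q, max (k + b * y) 0 = (sqPos (k + b * q) - sqPos (k + b * p)) / (2 * b) := by
  rw [intervalIntegral.integral_eq_sub_of_hasDerivAt
    (f := fun y => sqPos (k + b * y) / (2 * b)), sub_div]
  · intro y _
    have deriv_affine : HasDerivAt (fun y => k + b * y) b y := by
      simpa using ((hasDerivAt_id y).const_mul b).const_add k
    refine (((hasDerivAt_sqPos _).comp y deriv_affine).div_const (2 * b)).congr_deriv ?_
    field_simp
  · exact Continuous.intervalIntegrable (by fun_prop) _ _

lemma quadratic_nonneg_of_det {A B C p q c : ℝ} (hA : 0 < A) (hD : B ^ 2 < 4 * A * C)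
    (hdet : A * q ^ 2 + C * p ^ 2 + c * B ^ 2 ≤ 4 * A * C * c + B * p * q) (s t : ℝ) :
    0 ≤ A * s ^ 2 + B * s * t + C * t ^ 2 + p * s + q * t + c := by
  set D := 4 * A * C - B ^ 2 with D_def
  have D_pos : 0 < D := sub_pos.2 hD
  have complete_squares :
      4 * A * D * (A * s ^ 2 + B * s * t + C * t ^ 2 + p * s + q * t + c) =
        D * (2 * A * s + B * t + p) ^ 2 + (D * t + 2 * A * q - B * p) ^ 2 +
          4 * A * (4 * A * C * c + B * p * q - A * q ^ 2 - C * p ^ 2 - c * B ^ 2) := by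
    rw [D_def]; ring
  have remainder_nonneg :
      0 ≤ 4 * A * C * c + B * p * q - A * q ^ 2 - C * p ^ 2 - c * B ^ 2 := by linarith
  refine nonneg_of_mul_nonneg_right (a := 4 * A * D) ?_ (mul_pos (mul_pos four_pos hA) D_pos)
  rw [complete_squares]
  positivity

-- Up to scaling, the Bernstein basis on `[l, r]`: a polynomial inequality in `a` is certified below
-- by nonnegative coefficients in it.
lemma sub_pow_mul_sub_pow_nonneg {l r x : ℝ} (hl : l ≤ x) (hr : x ≤ r) (i j : ℕ) :
    0 ≤ (x - l) ^ i * (r - x) ^ j :=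
  mul_nonneg (pow_nonneg (sub_nonneg.2 hl) i) (pow_nonneg (sub_nonneg.2 hr) j)

lemma eight_mul_sq_add_sub_four_nonneg (ha : (Real.sqrt 129 - 1) / 16 ≤ a) :
    0 ≤ 8 * a ^ 2 + a - 4 := by
  nlinarith [Real.sq_sqrt (by norm_num : (0 : ℝ) ≤ 129), Real.sqrt_nonneg 129]

lemma cubic_nonpos_of_le_root {β : ℝ} (hroot : 7 * β ^ 3 - 5 * β - 1 = 0) (ha : 0 < a)
    (haβ : a ≤ β) : 7 * a ^ 3 - 5 * a - 1 ≤ 0 := by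
  have hβ : 0 < β := ha.trans_le haβ
  have root_bound : 0 < 7 * β ^ 2 - 5 := pos_of_mul_pos_right (a := β) (by linarith) hβ.le
  have slope_nonneg : 0 ≤ 7 * (β ^ 2 + a * β + a ^ 2) - 5 := by
    linarith [mul_pos ha hβ, sq_nonneg a]
  linarith [mul_nonneg (sub_nonneg.2 haβ) slope_nonneg]

lemma le_of_quadratic_nonneg (ha : 0 < a) (h6 : 0 ≤ 8 * a ^ 2 + a - 4) : 0.647 ≤ a := by
  nlinarith

lemma le_of_cubic_nonpos (h7 : 7 * a ^ 3 - 5 * a - 1 ≤ 0) : a ≤ 0.932 := by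
  by_contra! ha
  nlinarith [mul_pos (sub_pos.2 ha) (sub_pos.2 ha), pow_pos (sub_pos.2 ha) 3]

/-- The plane region of pairs `(x, y)` whose generalized Schur triple `(x, y, x + a * y)` lies in
the colour class `C`. -/
def schurTriples (a : ℝ) (C : Set ℝ) : Set (ℝ × ℝ) :=
  {p | p.1 ∈ C ∧ p.2 ∈ C ∧ p.1 + a * p.2 ∈ C}

/-- The length of the overlap of `C` with its translate by `-c`. For `c = a * y` this is the length
of the slice of `schurTriples a C` at height `y ∈ C`. -/
noncomputable def selfOverlap (C : Set ℝ) (c : ℝ) : ℝ := volume.real (C ∩ (· + c) ⁻¹' C)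

lemma measurableSet_schurTriples {C : Set ℝ} (hC : MeasurableSet C) (a : ℝ) :
    MeasurableSet (schurTriples a C) :=
  (measurable_fst hC).inter ((measurable_snd hC).inter
    ((measurable_fst.add (measurable_snd.const_mul a)) hC))

lemma volume_schurTriples {C : Set ℝ} (hC : MeasurableSet C) (a : ℝ) :
    volume (schurTriples a C) = ∫⁻ y in C, volume (C ∩ (· + a * y) ⁻¹' C) := by
  rw [Measure.volume_eq_prod, Measure.prod_apply_symm (measurableSet_schurTriples hC a),
    ← lintegral_indicator hC]
  refine lintegral_congr fun y => ?_
  by_cases hy : y ∈ C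
  · rw [indicator_of_mem hy]
    congr 1
    ext x
    simp [schurTriples, hy]
  · rw [indicator_of_notMem hy]
    convert measure_empty (μ := volume)
    ext x
    simp [schurTriples, hy]

lemma measurable_volume_inter_preimage_add_mul {C : Set ℝ} (hC : MeasurableSet C) (a : ℝ) :
    Measurable fun y => volume (C ∩ (· + a * y) ⁻¹' C) := by
  have pairs_measurable : MeasurableSet {p : ℝ × ℝ | p.1 ∈ C ∧ p.1 + a * p.2 ∈ C} :=
    (measurable_fst hC).inter ((measurable_fst.add (measurable_snd.const_mul a)) hC)
  exact measurable_measure_prodMk_right pairs_measurable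

lemma volume_real_schurTriples {C : Set ℝ} (hC : MeasurableSet C) (hfin : volume C ≠ ⊤) (a : ℝ) :
    volume.real (schurTriples a C) = ∫ y in C, selfOverlap C (a * y) := by
  have slice_lt_top : ∀ y, volume (C ∩ (· + a * y) ⁻¹' C) < ⊤ := fun y =>
    (measure_mono inter_subset_left).trans_lt hfin.lt_top
  rw [measureReal_def, volume_schurTriples hC, ← integral_toReal
    (measurable_volume_inter_preimage_add_mul hC a).aemeasurable (.of_forall slice_lt_top)]
  rfl

lemma volume_schurTriples_ne_top {C : Set ℝ} (hfin : volume C ≠ ⊤) (a : ℝ) :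
    volume (schurTriples a C) ≠ ⊤ := by
  have triples_subset : schurTriples a C ⊆ C ×ˢ C := fun _ hp => ⟨hp.1, hp.2.1⟩
  refine measure_ne_top_of_subset triples_subset ?_
  rw [Measure.volume_eq_prod, Measure.prod_prod]
  exact ENNReal.mul_ne_top hfin hfin

lemma integrableOn_selfOverlap {C : Set ℝ} (hC : MeasurableSet C) (hfin : volume C ≠ ⊤) (a : ℝ) :
    IntegrableOn (fun y => selfOverlap C (a * y)) C :=
  integrable_toReal_of_lintegral_ne_top
    (measurable_volume_inter_preimage_add_mul hC a).aemeasurable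
    (volume_schurTriples hC a ▸ volume_schurTriples_ne_top hfin a)

lemma volume_Icc_union_Ioc_ne_top (p q v w : ℝ) : volume (Icc p q ∪ Ioc v w) ≠ ⊤ :=
  (measure_union_lt_top measure_Icc_lt_top measure_Ioc_lt_top).ne

lemma areaA_eq_add (a s t : ℝ) :
    areaA a s t = volume.real (schurTriples a (Icc 0 s ∪ Ioc t 1)) +
      volume.real (schurTriples a (Ioc s t)) := by
  have colours_disjoint : Disjoint (Icc 0 s ∪ Ioc t 1) (Ioc s t) := by
    rw [Set.disjoint_left]
    rintro x (hx | hx) hx' <;> linarith [hx.1, hx.2, hx'.1, hx'.2]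
  have triples_disjoint :
      Disjoint (schurTriples a (Icc 0 s ∪ Ioc t 1)) (schurTriples a (Ioc s t)) :=
    Set.disjoint_left.2 fun _ hred hblue => Set.disjoint_left.1 colours_disjoint hred.1 hblue.1
  exact measureReal_union triples_disjoint (measurableSet_schurTriples measurableSet_Ioc a)
    (volume_schurTriples_ne_top (volume_Icc_union_Ioc_ne_top 0 s t 1) a)
    (volume_schurTriples_ne_top measure_Ioc_lt_top.ne a)

lemma selfOverlap_congr {C D : Set ℝ} (h : C =ᵐ[volume] D) : selfOverlap C = selfOverlap D :=
  funext fun c => measureReal_congr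
    (h.inter ((quasiMeasurePreserving_add_right volume c).preimage_ae_eq h))

lemma selfOverlap_Ioc (s t : ℝ) {c : ℝ} (hc : 0 ≤ c) :
    selfOverlap (Ioc s t) c = max (t - s - c) 0 := by
  have overlap_eq : Ioc s t ∩ (· + c) ⁻¹' Ioc s t = Ioc s (t - c) := by
    ext x
    simp only [mem_inter_iff, mem_preimage, mem_Ioc]
    constructor
    · exact fun hx => ⟨hx.1.1, by linarith [hx.2.2]⟩
    · exact fun hx => ⟨⟨hx.1, by linarith [hx.2]⟩, by linarith [hx.1], by linarith [hx.2]⟩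
  rw [selfOverlap, overlap_eq, Real.volume_real_Ioc, sub_right_comm]

lemma Ioc_union_Ioc_inter_preimage_add {c : ℝ} (hst : s ≤ t) (hc : 0 ≤ c) :
    (Ioc 0 s ∪ Ioc t 1) ∩ (· + c) ⁻¹' (Ioc 0 s ∪ Ioc t 1) =
      Ioc 0 (s - c) ∪ (Ioc (max 0 (t - c)) (min s (1 - c)) ∪ Ioc t (1 - c)) := by
  ext x
  simp only [mem_inter_iff, mem_preimage, mem_union, mem_Ioc, max_lt_iff, le_min_iff]
  constructor
  · rintro ⟨hx | hx, hxc | hxc⟩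
    · exact Or.inl ⟨hx.1, by linarith⟩
    · exact Or.inr (Or.inl ⟨⟨hx.1, by linarith⟩, hx.2, by linarith⟩)
    · linarith
    · exact Or.inr (Or.inr ⟨hx.1, by linarith⟩)
  · rintro (hx | hx | hx)
    · exact ⟨Or.inl ⟨hx.1, by linarith⟩, Or.inl ⟨by linarith, by linarith⟩⟩
    · exact ⟨Or.inl ⟨hx.1.1, hx.2.1⟩, Or.inr ⟨by linarith, by linarith⟩⟩
    · exact ⟨Or.inr ⟨hx.1, by linarith⟩, Or.inr ⟨by linarith, by linarith⟩⟩

lemma volume_real_Ioc_max_min {c : ℝ} (hs : 0 ≤ s) (ht : t ≤ 1) (hc : c ≤ 1) :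
    volume.real (Ioc (max 0 (t - c)) (min s (1 - c))) =
      max (s - t + c) 0 - max (c - t) 0 - max (s - 1 + c) 0 := by
  rw [Real.volume_real_Ioc]
  simp only [max_def, min_def]
  split_ifs <;> linarith

lemma selfOverlap_Icc_union_Ioc {c : ℝ} (hs : 0 ≤ s) (hst : s ≤ t) (ht : t ≤ 1) (hc : 0 ≤ c)
    (hc1 : c ≤ 1) :
    selfOverlap (Icc 0 s ∪ Ioc t 1) c = max (s - c) 0 + max (1 - t - c) 0 + max (s - t + c) 0 -
      max (c - t) 0 - max (s - 1 + c) 0 := by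
  have drop_zero : (Icc 0 s ∪ Ioc t 1 : Set ℝ) =ᵐ[volume] (Ioc 0 s ∪ Ioc t 1 : Set ℝ) :=
    Ioc_ae_eq_Icc.symm.union (ae_eq_refl _)
  have right_disjoint : Disjoint (Ioc (max 0 (t - c)) (min s (1 - c))) (Ioc t (1 - c)) :=
    Set.disjoint_left.2 fun x hx hx' => by
      linarith [hx.2.trans (min_le_left s (1 - c)), hx'.1]
  have left_disjoint : Disjoint (Ioc 0 (s - c))
      (Ioc (max 0 (t - c)) (min s (1 - c)) ∪ Ioc t (1 - c)) := by
    refine Set.disjoint_left.2 ?_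
    rintro x hx (hx' | hx')
    · linarith [hx.2, (le_max_right 0 (t - c)).trans_lt hx'.1]
    · linarith [hx.2, hx'.1]
  rw [selfOverlap_congr drop_zero, selfOverlap, Ioc_union_Ioc_inter_preimage_add hst hc,
    measureReal_union left_disjoint (measurableSet_Ioc.union measurableSet_Ioc)
      measure_Ioc_lt_top.ne (measure_union_lt_top measure_Ioc_lt_top measure_Ioc_lt_top).ne,
    measureReal_union right_disjoint measurableSet_Ioc measure_Ioc_lt_top.ne
      measure_Ioc_lt_top.ne, volume_real_Ioc_max_min hs ht hc1,
    Real.volume_real_Ioc, Real.volume_real_Ioc, sub_zero, sub_right_comm 1 c t]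
  ring

lemma integral_selfOverlap_Ioc (ha : 0 < a) (hs : 0 ≤ s) (hst : s ≤ t) :
    ∫ y in Ioc s t, selfOverlap (Ioc s t) (a * y) =
      (sqPos (t - s - a * s) - sqPos (t - s - a * t)) / (2 * a) := by
  have overlap_eq : ∀ y ∈ Ioc s t, selfOverlap (Ioc s t) (a * y) = max (t - s + -a * y) 0 := by
    intro y hy
    rw [selfOverlap_Ioc s t (mul_nonneg ha.le (hs.trans hy.1.le)), neg_mul, sub_eq_add_neg]
  rw [setIntegral_congr_fun measurableSet_Ioc overlap_eq, ← intervalIntegral.integral_of_le hst,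
    integral_max_add_mul (neg_ne_zero.2 ha.ne')]
  simp only [neg_mul, ← sub_eq_add_neg]
  ring

lemma integral_selfOverlap_Icc_union_Ioc (ha : 0 < a) (ha1 : a ≤ 1) (hs : 0 ≤ s) (hst : s ≤ t)
    (ht : t ≤ 1) {p q : ℝ} (hp : 0 ≤ p) (hpq : p ≤ q) (hq : q ≤ 1) :
    ∫ y in Ioc p q, selfOverlap (Icc 0 s ∪ Ioc t 1) (a * y) =
      (sqPos (s - a * p) - sqPos (s - a * q) + sqPos (1 - t - a * p) - sqPos (1 - t - a * q) +
        sqPos (s - t + a * q) - sqPos (s - t + a * p) - sqPos (a * q - t) + sqPos (a * p - t) -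
        sqPos (s - 1 + a * q) + sqPos (s - 1 + a * p)) / (2 * a) := by
  have overlap_eq : ∀ y ∈ Ioc p q, selfOverlap (Icc 0 s ∪ Ioc t 1) (a * y) =
      max (s + -a * y) 0 + max (1 - t + -a * y) 0 + max (s - t + a * y) 0 -
        max (-t + a * y) 0 - max (s - 1 + a * y) 0 := by
    intro y hy
    have ay_nonneg : 0 ≤ a * y := mul_nonneg ha.le (hp.trans hy.1.le)
    have ay_le_one : a * y ≤ 1 := by nlinarith [hy.1, hy.2]
    rw [selfOverlap_Icc_union_Ioc hs hst ht ay_nonneg ay_le_one, neg_mul, neg_add_eq_sub,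
      ← sub_eq_add_neg, ← sub_eq_add_neg]
  rw [setIntegral_congr_fun measurableSet_Ioc overlap_eq, ← intervalIntegral.integral_of_le hpq,
    intervalIntegral.integral_sub, intervalIntegral.integral_sub, intervalIntegral.integral_add,
    intervalIntegral.integral_add]
  · simp only [integral_max_add_mul ha.ne', integral_max_add_mul (neg_ne_zero.2 ha.ne')]
    simp only [neg_mul, ← sub_eq_add_neg, neg_add_eq_sub]
    ring
  all_goals exact Continuous.intervalIntegrable (by fun_prop) _ _

lemma areaA_eq_integral_add (hst : s ≤ t) :
    areaA a s t = (∫ y in Ioc 0 s, selfOverlap (Icc 0 s ∪ Ioc t 1) (a * y)) +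
      (∫ y in Ioc t 1, selfOverlap (Icc 0 s ∪ Ioc t 1) (a * y)) +
      ∫ y in Ioc s t, selfOverlap (Ioc s t) (a * y) := by
  have red_measurable : MeasurableSet (Icc 0 s ∪ Ioc t 1) :=
    measurableSet_Icc.union measurableSet_Ioc
  have red_finite := volume_Icc_union_Ioc_ne_top 0 s t 1
  have blocks_disjoint : Disjoint (Icc 0 s) (Ioc t 1) :=
    Set.disjoint_left.2 fun x hx hx' => by linarith [hx.2, hx'.1]
  have red_integrable := integrableOn_selfOverlap red_measurable red_finite a
  rw [areaA_eq_add, volume_real_schurTriples red_measurable red_finite,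
    volume_real_schurTriples measurableSet_Ioc measure_Ioc_lt_top.ne,
    setIntegral_union blocks_disjoint measurableSet_Ioc
      (red_integrable.mono_set subset_union_left) (red_integrable.mono_set subset_union_right),
    integral_Icc_eq_integral_Ioc]

/-- The quadratic polynomial that `2 * a * areaA a s t` equals near its minimiser. -/
def baseQuad (a s t : ℝ) : ℝ :=
  1 + 2 * a - (2 + 4 * a) * t + (1 + 4 * a) * s ^ 2 + (2 + 2 * a) * t ^ 2 - (2 + 2 * a) * s * t

/-- The closed form of `2 * a * areaA a s t` on `0 ≤ s ≤ t ≤ 1`, valid for `0 < a ≤ 1`. -/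
noncomputable def scaledArea (a s t : ℝ) : ℝ :=
  baseQuad a s t + (sqPos (1 - a - s) - sqPos (t - s - a)) +
    (sqPos (1 - t - a * t) - sqPos (1 - a - t)) - sqPos (a - t) - sqPos (1 - s - a * t) -
    sqPos (1 - t - a * s) - sqPos (s - a) - sqPos ((1 + a) * s - 1) + sqPos (s - a * t)

lemma areaA_eq_scaledArea_div (ha : 0 < a) (ha1 : a ≤ 1) (hs : 0 ≤ s) (hst : s ≤ t) (ht : t ≤ 1) :
    areaA a s t = scaledArea a s t / (2 * a) := by
  rw [areaA_eq_integral_add hst, integral_selfOverlap_Ioc ha hs hst,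
    integral_selfOverlap_Icc_union_Ioc ha ha1 hs hst ht le_rfl hs (hst.trans ht),
    integral_selfOverlap_Icc_union_Ioc ha ha1 hs hst ht (hs.trans hst) ht le_rfl,
    ← add_div, ← add_div]
  congr 1
  simp only [mul_zero, mul_one, sub_zero, add_zero, zero_sub]
  have as_le_s : a * s ≤ s := mul_le_of_le_one_left hs ha1
  have at_le_t : a * t ≤ t := mul_le_of_le_one_left (hs.trans hst) ha1
  rw [sqPos_of_nonneg hs, sqPos_of_nonneg (u := s - a * s) (by linarith),
    sqPos_of_nonneg (u := 1 - t) (by linarith), sqPos_of_nonpos (u := s - t) (by linarith),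
    sqPos_of_nonpos (u := a * s - t) (by linarith), sqPos_of_nonpos (u := -t) (by linarith),
    sqPos_of_nonpos (u := s - 1) (by linarith), sqPos_of_nonpos (u := a * t - t) (by linarith),
    sqPos_eq_sq_sub_sqPos (u := s - t + a * s) (v := t - s - a * s) (by ring),
    sqPos_eq_sq_sub_sqPos (u := s - t + a) (v := t - s - a) (by ring),
    sqPos_eq_sq_sub_sqPos (u := s - t + a * t) (v := t - s - a * t) (by ring),
    sqPos_eq_sq_sub_sqPos (u := s - 1 + a) (v := 1 - a - s) (by ring),
    sqPos_eq_sq_sub_sqPos (u := s - 1 + a * t) (v := 1 - s - a * t) (by ring),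
    sub_right_comm 1 t a, show s - 1 + a * s = (1 + a) * s - 1 by ring, scaledArea, baseQuad]
  ring

/-- The claimed minimum of `scaledArea a`, that is `2 * a` times the claimed minimum area. -/
noncomputable def scaledMin (a : ℝ) : ℝ :=
  a * (-2 * a ^ 2 + 3 * a + 2) / ((a + 1) * (7 * a + 1))

lemma scaledMin_div_two_mul (ha : a ≠ 0) :
    scaledMin a / (2 * a) = (-2 * a ^ 2 + 3 * a + 2) / (2 * (a + 1) * (7 * a + 1)) := by
  rw [scaledMin]
  field_simp

/-- The first coordinate `s₀` of the critical point of `baseQuad a`. -/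
noncomputable def optS (a : ℝ) : ℝ := (2 * a + 1) / (7 * a + 1)

/-- The second coordinate `t₀` of the critical point of `baseQuad a`. -/
noncomputable def optT (a : ℝ) : ℝ := (8 * a ^ 2 + 6 * a + 1) / (7 * a ^ 2 + 8 * a + 1)

lemma baseQuad_eq_scaledMin_add (ha : 0 < a) (s t : ℝ) :
    baseQuad a s t = scaledMin a + ((1 + 4 * a) * (s - optS a) ^ 2 +
      (2 + 2 * a) * (t - optT a) ^ 2 - (2 + 2 * a) * (s - optS a) * (t - optT a)) := by
  rw [baseQuad, scaledMin, optS, optT, show 7 * a ^ 2 + 8 * a + 1 = (a + 1) * (7 * a + 1) by ring]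
  field_simp
  ring

lemma scaledMin_le_baseQuad (ha : 0 < a) (s t : ℝ) : scaledMin a ≤ baseQuad a s t := by
  have form_nonneg := quadratic_nonneg_of_det (A := 1 + 4 * a) (B := -(2 + 2 * a))
    (C := 2 + 2 * a) (p := 0) (q := 0) (c := 0) (by positivity) (by nlinarith) (by simp)
    (s - optS a) (t - optT a)
  rw [baseQuad_eq_scaledMin_add ha]
  linarith

lemma one_sub_optS_sub_mul_optT_nonpos (ha : 0 < a) (h6 : 0 ≤ 8 * a ^ 2 + a - 4) :
    1 - optS a - a * optT a ≤ 0 := by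
  have closed_form : 1 - optS a - a * optT a =
      -(a * (8 * a ^ 2 + a - 4)) / ((a + 1) * (7 * a + 1)) := by
    rw [optS, optT, show 7 * a ^ 2 + 8 * a + 1 = (a + 1) * (7 * a + 1) by ring]
    field_simp
    ring
  rw [closed_form]
  exact div_nonpos_of_nonpos_of_nonneg (neg_nonpos.2 (by positivity)) (by positivity)

lemma le_optT (ha : 0 < a) (h7 : 7 * a ^ 3 - 5 * a - 1 ≤ 0) : a ≤ optT a := by
  rw [optT, le_div_iff₀ (by positivity)]
  linarith

lemma scaledMin_le_baseQuad_sub_sq_one_sub (ha : 0 < a) (ha1 : a ≤ 1)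
    (h6 : 0 ≤ 8 * a ^ 2 + a - 4) (hv : 0 ≤ 1 - s - a * t) :
    scaledMin a ≤ baseQuad a s t - (1 - s - a * t) ^ 2 := by
  have sq_le : (1 - s - a * t) ^ 2 ≤ ((s - optS a) + a * (t - optT a)) ^ 2 := by
    rw [sq_le_sq, abs_of_nonneg hv]
    refine le_trans ?_ (neg_le_abs _)
    linarith [one_sub_optS_sub_mul_optT_nonpos ha h6]
  have form_nonneg := quadratic_nonneg_of_det (A := 4 * a) (B := -(2 + 4 * a))
    (C := 2 + 2 * a - a ^ 2) (p := 0) (q := 0) (c := 0) (by positivity)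
    (by nlinarith [mul_nonneg (sq_nonneg a) (sub_nonneg.2 ha1), le_of_quadratic_nonneg ha h6])
    (by simp) (s - optS a) (t - optT a)
  rw [baseQuad_eq_scaledMin_add ha]
  linarith

lemma scaledMin_le_baseQuad_sub_sq_sub (ha : 0 < a) (h7 : 7 * a ^ 3 - 5 * a - 1 ≤ 0)
    (hu : 0 ≤ a - t) (s : ℝ) : scaledMin a ≤ baseQuad a s t - (a - t) ^ 2 := by
  have sq_le : (a - t) ^ 2 ≤ (t - optT a) ^ 2 := by
    rw [sq_le_sq, abs_of_nonneg hu]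
    refine le_trans ?_ (neg_le_abs _)
    linarith [le_optT ha h7]
  have form_nonneg := quadratic_nonneg_of_det (A := 1 + 4 * a) (B := -(2 + 2 * a))
    (C := 1 + 2 * a) (p := 0) (q := 0) (c := 0) (by positivity) (by nlinarith) (by simp)
    (s - optS a) (t - optT a)
  rw [baseQuad_eq_scaledMin_add ha]
  linarith

-- The tangent line of `scaledMin` at `a = 0.776`, with coefficients rounded.
lemma scaledMin_le_linear (ha : 0 < a) : scaledMin a ≤ 0.2786 - 0.085 * a := by
  rw [scaledMin, div_le_iff₀ (by positivity)]
  nlinarith [mul_nonneg ha.le (sq_nonneg (a - 0.776)), sq_nonneg (a - 0.776)]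

lemma scaledMin_le_sq_sub_sqPos (h1 : 0.647 ≤ a) (h2 : a ≤ 0.932) (hs : 1 ≤ (1 + a) * s)
    (hs1 : s ≤ 1) : scaledMin a ≤ (2 * a - a ^ 2) * s ^ 2 - sqPos (s - a) := by
  refine (scaledMin_le_linear (by linarith : 0 < a)).trans ?_
  have range_nonneg := mul_nonneg (sub_nonneg.2 h1) (sub_nonneg.2 h2)
  rcases le_total s a with hsa | hsa
  · rw [sqPos_of_nonpos (by linarith)]
    have half_le_s : 0.5 ≤ s := by nlinarith
    nlinarith [mul_self_le_mul_self (by norm_num) half_le_s]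
  · rw [sqPos_of_nonneg (by linarith)]
    nlinarith [mul_nonneg (sub_nonneg.2 hsa) (sub_nonneg.2 hs1)]

-- The residual is the difference of the two sides, with `scaledMin a` replaced by its linear bound,
-- minus `3 * v * (-w) + 3 * u * (-w) + 3.5 * u * v`, where `u`, `v`, `w` are the forms in `hu`,
-- `hv`, `hw`. These multipliers, like those for the three cells below, were found numerically.
lemma scaledMin_le_baseQuad_sub_sq_sub_sq (h1 : 0.647 ≤ a) (h2 : a ≤ 0.932) (hu : 0 ≤ a - t)
    (hv : 0 ≤ 1 - s - a * t) (hw : 1 - t - a * s ≤ 0) :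
    scaledMin a ≤ baseQuad a s t - (a - t) ^ 2 - (1 - s - a * t) ^ 2 := by
  have bern := sub_pow_mul_sub_pow_nonneg h1 h2
  have residual_nonneg := quadratic_nonneg_of_det (A := 7 * a) (B := -2.5 - a + 3 * a ^ 2)
    (C := 4 + 1.5 * a - a ^ 2) (p := -1 + 0.5 * a - 3 * a ^ 2) (q := -4.5 - 6 * a + 3.5 * a ^ 2)
    (c := 2.7214 + 1.585 * a - a ^ 2) (by linarith)
    (by linarith [bern 0 4, bern 1 3, bern 2 2, bern 3 1, bern 4 0])
    (by linarith [bern 0 6, bern 1 5, bern 2 4, bern 3 3, bern 4 2, bern 5 1, bern 6 0]) s t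
  rw [baseQuad]
  linarith [scaledMin_le_linear (by linarith : 0 < a), mul_nonneg hv (neg_nonneg.2 hw),
    mul_nonneg hu (neg_nonneg.2 hw), mul_nonneg hu hv]

-- The region `t + a * s ≤ 1` is cut into the cell `a ≤ t` and, for `t ≤ a`, the cells `s ≤ 1 - a`
-- and `1 - a ≤ s`.
lemma scaledMin_le_upper_cell (h1 : 0.647 ≤ a) (h2 : a ≤ 0.932) (hs : 0 ≤ s) (hu : a - t ≤ 0)
    (hw : 0 ≤ 1 - t - a * s) :
    scaledMin a ≤ baseQuad a s t - (1 - s - a * t) ^ 2 - (1 - t - a * s) ^ 2 +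
      (1 - t - a * s) * (2 * (1 - a - s) - (1 - t - a * s)) := by
  have bern := sub_pow_mul_sub_pow_nonneg h1 h2
  have residual_nonneg := quadratic_nonneg_of_det (A := 4.2 * a + a ^ 2) (B := -1.8 - 4 * a)
    (C := 1 + 2 * a - a ^ 2) (p := 1.8 - a + a ^ 2) (q := -1 - a)
    (c := -0.2786 + 1.085 * a) (by positivity)
    (by linarith [bern 0 4, bern 1 3, bern 2 2, bern 3 1, bern 4 0])
    (by linarith [bern 0 6, bern 1 5, bern 2 4, bern 3 3, bern 4 2, bern 5 1, bern 6 0]) s t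
  rw [baseQuad]
  linarith [scaledMin_le_linear (by linarith : 0 < a), mul_nonneg (neg_nonneg.2 hu) hw,
    mul_nonneg (by linarith : 0 ≤ 3 * a - 1.8) (mul_nonneg hs hw)]

lemma scaledMin_le_lower_left_cell (h1 : 0.647 ≤ a) (h2 : a ≤ 0.932) (hs : 0 ≤ s) (hu : 0 ≤ a - t) :
    scaledMin a ≤ baseQuad a s t - (a - t) ^ 2 - (1 - s - a * t) ^ 2 - (1 - t - a * s) ^ 2 +
      (1 - a - s) ^ 2 +
      0.4 * (1 - s - t) * (2 * (1 - t - a * t) - 0.4 * (1 - s - t)) := by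
  have bern := sub_pow_mul_sub_pow_nonneg h1 h2
  have residual_nonneg := quadratic_nonneg_of_det (A := 0.84 + 4 * a - a ^ 2)
    (B := -0.62 - 5.2 * a) (C := 0.64 + 2.8 * a - a ^ 2) (p := -0.48 + 3.1 * a)
    (q := -1.28 - 0.8 * a) (c := 0.3614 + 0.085 * a) (by nlinarith)
    (by linarith [bern 0 4, bern 1 3, bern 2 2, bern 3 1, bern 4 0])
    (by linarith [bern 0 5, bern 1 4, bern 2 3, bern 3 2, bern 4 1, bern 5 0]) s t
  rw [baseQuad]
  linarith [scaledMin_le_linear (by linarith : 0 < a), mul_nonneg hs hu]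

lemma scaledMin_le_lower_right_cell (h1 : 0.647 ≤ a) (h2 : a ≤ 0.932) (hx : 1 - a - s ≤ 0)
    (hu : 0 ≤ a - t) (hw : 0 ≤ 1 - t - a * s) :
    scaledMin a ≤ baseQuad a s t - (a - t) ^ 2 - (1 - s - a * t) ^ 2 - (1 - t - a * s) ^ 2 := by
  have bern := sub_pow_mul_sub_pow_nonneg h1 h2
  have residual_nonneg := quadratic_nonneg_of_det (A := 7.5 * a - a ^ 2)
    (B := 1.5 - 6 * a) (C := 2 * a - a ^ 2) (p := -1.5 - 1.5 * a + 3.5 * a ^ 2)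
    (q := -1.636 + 1.5 * a) (c := 2.2214 - 3.279 * a + a ^ 2) (by nlinarith)
    (by linarith [bern 0 4, bern 1 3, bern 2 2, bern 3 1, bern 4 0])
    (by linarith [bern 0 6, bern 1 5, bern 2 4, bern 3 3, bern 4 2, bern 5 1, bern 6 0]) s t
  rw [baseQuad]
  linarith [scaledMin_le_linear (by linarith : 0 < a), mul_nonneg (neg_nonneg.2 hx) hw,
    mul_nonneg (sub_nonneg.2 h2) hu]

lemma scaledMin_le_scaledArea_of_one_le_mul (h1 : 0.647 ≤ a) (h2 : a ≤ 0.932) (hst : s ≤ t)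
    (ht : t ≤ 1) (hs : 1 ≤ (1 + a) * s) : scaledMin a ≤ scaledArea a s t := by
  have hv : 1 - s - a * t ≤ 0 := by nlinarith
  have hw : 1 - t - a * s ≤ 0 := by nlinarith
  have gap_bound : (1 - t) * ((1 + a) * (1 - t)) ≤ (1 - t) * (a + (1 + a) * (s - t)) :=
    mul_le_mul_of_nonneg_left (by linarith) (by linarith)
  have sqPos_a_sub_t_le : sqPos (a - t) ≤ (1 - t) ^ 2 :=
    (sub_nonneg.1 (sqPos_sub_sqPos_nonneg (by linarith))).trans_eq
      (sqPos_of_nonneg (by linarith))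
  have expand : baseQuad a s t - ((1 + a) * s - 1) ^ 2 =
      (2 * a - a ^ 2) * s ^ 2 + 2 * ((1 - t) * (a + (1 + a) * (s - t))) := by
    rw [baseQuad]; ring
  rw [scaledArea, sqPos_of_nonpos hv, sqPos_of_nonpos hw,
    sqPos_of_nonneg (u := (1 + a) * s - 1) (by linarith)]
  have outer_nonneg := sqPos_sub_sqPos_nonneg (by linarith : t - s - a ≤ 1 - a - s)
  have inner_nonneg := sqPos_sub_sqPos_nonneg (by nlinarith : 1 - a - t ≤ 1 - t - a * t)
  nlinarith [scaledMin_le_sq_sub_sqPos h1 h2 hs (hst.trans ht), outer_nonneg,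
    inner_nonneg, sqPos_nonneg (s - a * t), sq_nonneg (1 - t)]

lemma le_scaledArea_of_mul_le_one (h1 : 0.647 ≤ a) (hs : (1 + a) * s ≤ 1) :
    baseQuad a s t + (sqPos (1 - a - s) - sqPos (t - s - a)) +
      (sqPos (1 - t - a * t) - sqPos (1 - a - t)) - sqPos (a - t) - sqPos (1 - s - a * t) -
      sqPos (1 - t - a * s) ≤ scaledArea a s t := by
  have s_le_a : s - a ≤ 0 := by nlinarith
  rw [scaledArea, sqPos_of_nonpos s_le_a, sqPos_of_nonpos (u := (1 + a) * s - 1) (by linarith)]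
  linarith [sqPos_nonneg (s - a * t)]

lemma scaledMin_le_scaledArea_of_one_le_add_mul (ha : 0 < a) (h6 : 0 ≤ 8 * a ^ 2 + a - 4)
    (h7 : 7 * a ^ 3 - 5 * a - 1 ≤ 0) (ht : t ≤ 1) (hs : (1 + a) * s ≤ 1)
    (hts : 1 ≤ t + a * s) : scaledMin a ≤ scaledArea a s t := by
  have h1 := le_of_quadratic_nonneg ha h6
  have h2 := le_of_cubic_nonpos h7
  have hw : 1 - t - a * s ≤ 0 := by linarith
  suffices h : scaledMin a ≤ baseQuad a s t - sqPos (a - t) - sqPos (1 - s - a * t) by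
    have area_le := le_scaledArea_of_mul_le_one (t := t) h1 hs
    rw [sqPos_of_nonpos hw] at area_le
    linarith [sqPos_sub_sqPos_nonneg (by linarith : t - s - a ≤ 1 - a - s),
      sqPos_sub_sqPos_nonneg (by nlinarith : 1 - a - t ≤ 1 - t - a * t)]
  rcases le_total (a - t) 0 with hu | hu <;> rcases le_total (1 - s - a * t) 0 with hv | hv
  · rw [sqPos_of_nonpos hu, sqPos_of_nonpos hv, sub_zero, sub_zero]
    exact scaledMin_le_baseQuad ha s t
  · rw [sqPos_of_nonpos hu, sqPos_of_nonneg hv, sub_zero]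
    exact scaledMin_le_baseQuad_sub_sq_one_sub ha (by linarith) h6 hv
  · rw [sqPos_of_nonneg hu, sqPos_of_nonpos hv, sub_zero]
    exact scaledMin_le_baseQuad_sub_sq_sub ha h7 hu s
  · rw [sqPos_of_nonneg hu, sqPos_of_nonneg hv]
    exact scaledMin_le_baseQuad_sub_sq_sub_sq h1 h2 hu hv hw

lemma scaledMin_le_scaledArea_of_add_mul_le_one (h1 : 0.647 ≤ a) (h2 : a ≤ 0.932) (hs : 0 ≤ s)
    (hst : s ≤ t) (hts : t + a * s ≤ 1) : scaledMin a ≤ scaledArea a s t := by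
  have as_nonneg : 0 ≤ a * s := by positivity
  have hw : 0 ≤ 1 - t - a * s := by linarith
  have hv : 0 ≤ 1 - s - a * t := by nlinarith
  have area_le := le_scaledArea_of_mul_le_one (t := t) h1 (by linarith : (1 + a) * s ≤ 1)
  rw [sqPos_of_nonneg hv, sqPos_of_nonneg hw] at area_le
  refine le_trans ?_ area_le
  have outer_nonneg := sqPos_sub_sqPos_nonneg (by linarith : t - s - a ≤ 1 - a - s)
  have inner_nonneg := sqPos_sub_sqPos_nonneg (by nlinarith : 1 - a - t ≤ 1 - t - a * t)
  rcases le_total (a - t) 0 with hu | hu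
  · rw [sqPos_of_nonpos hu]
    have outer_ge := mul_two_mul_sub_le_sqPos_sub_sqPos hw
      (by linarith : 1 - t - a * s ≤ 1 - a - s - (t - s - a))
    linarith [scaledMin_le_upper_cell h1 h2 hs hu hw]
  rw [sqPos_of_nonneg hu]
  rcases le_total (1 - a - s) 0 with hx | hx
  · linarith [scaledMin_le_lower_right_cell h1 h2 hx hu hw]
  · rw [sqPos_of_nonneg hx, sqPos_of_nonpos (by linarith : t - s - a ≤ 0)]
    have inner_ge := mul_two_mul_sub_le_sqPos_sub_sqPos
      (by linarith : 0 ≤ 0.4 * (1 - s - t))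
      (by nlinarith : 0.4 * (1 - s - t) ≤ 1 - t - a * t - (1 - a - t))
    linarith [scaledMin_le_lower_left_cell h1 h2 hs hu]

theorem scaledMin_le_scaledArea (ha : 0 < a) (h6 : 0 ≤ 8 * a ^ 2 + a - 4)
    (h7 : 7 * a ^ 3 - 5 * a - 1 ≤ 0) (hs : 0 ≤ s) (hst : s ≤ t) (ht : t ≤ 1) :
    scaledMin a ≤ scaledArea a s t := by
  have h1 := le_of_quadratic_nonneg ha h6
  have h2 := le_of_cubic_nonpos h7
  rcases le_total (t + a * s) 1 with hts | hts
  · exact scaledMin_le_scaledArea_of_add_mul_le_one h1 h2 hs hst hts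
  rcases le_total 1 ((1 + a) * s) with hs1 | hs1
  · exact scaledMin_le_scaledArea_of_one_le_mul h1 h2 hst ht hs1
  · exact scaledMin_le_scaledArea_of_one_le_add_mul ha h6 h7 ht hs1 hts

lemma optS_mem_Icc (h1 : 0.647 ≤ a) (h2 : a ≤ 0.932) : optS a ∈ Icc 0.38 0.42 := by
  rw [optS, mem_Icc, le_div_iff₀ (by positivity), div_le_iff₀ (by positivity)]
  constructor <;> linarith

lemma optT_mem_Icc (h1 : 0.647 ≤ a) (h2 : a ≤ 0.932) : optT a ∈ Icc 0.9 1 := by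
  rw [optT, mem_Icc, le_div_iff₀ (by positivity), div_le_iff₀ (by positivity)]
  constructor <;> nlinarith

lemma scaledArea_optS_optT (ha : 0 < a) (h6 : 0 ≤ 8 * a ^ 2 + a - 4)
    (h7 : 7 * a ^ 3 - 5 * a - 1 ≤ 0) : scaledArea a (optS a) (optT a) = scaledMin a := by
  have h1 := le_of_quadratic_nonneg ha h6
  have h2 := le_of_cubic_nonpos h7
  obtain ⟨hs, hs'⟩ := optS_mem_Icc h1 h2
  obtain ⟨ht, ht'⟩ := optT_mem_Icc h1 h2
  have a_le_optT := le_optT ha h7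
  have hv := one_sub_optS_sub_mul_optT_nonpos ha h6
  have baseQuad_opt : baseQuad a (optS a) (optT a) = scaledMin a := by
    rw [baseQuad_eq_scaledMin_add ha]; ring
  rw [scaledArea, baseQuad_opt, sqPos_of_nonpos hv, sqPos_of_nonpos (u := 1 - a - _) (by linarith),
    sqPos_of_nonpos (u := optT a - _ - _) (by linarith),
    sqPos_of_nonpos (u := 1 - optT a - a * optT a) (by nlinarith),
    sqPos_of_nonpos (u := 1 - a - _) (by linarith), sqPos_of_nonpos (u := a - _) (by linarith),
    sqPos_of_nonpos (u := 1 - _ - a * _) (by nlinarith),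
    sqPos_of_nonpos (u := _ - a) (by linarith),
    sqPos_of_nonpos (u := (1 + a) * _ - 1) (by nlinarith),
    sqPos_of_nonpos (u := _ - a * _) (by nlinarith)]
  ring

/-- For `α₆ ≤ a ≤ α₇`, where `α₆ = (√129 − 1)/16` (positive root of `8a² + a − 4`)
and `α₇` is the root of `7a³ − 5a − 1` in `[0,1]`, the minimum of `A(s,t,a)` over
`0 ≤ s ≤ t ≤ 1` is `(−2a² + 3a + 2)/(2(a+1)(7a+1))`, attained at
`s₀ = (2a+1)/(7a+1)`, `t₀ = (8a²+6a+1)/(7a²+8a+1)`. -/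
theorem area_min_alpha6_alpha7 (β : ℝ) (hβ : β ∈ Set.Icc (0 : ℝ) 1)
    (hroot : 7 * β ^ 3 - 5 * β - 1 = 0) (a : ℝ)
    (ha1 : (Real.sqrt 129 - 1) / 16 ≤ a) (ha2 : a ≤ β) :
    (∀ s t : ℝ, 0 ≤ s → s ≤ t → t ≤ 1 →
      (-2 * a ^ 2 + 3 * a + 2) / (2 * (a + 1) * (7 * a + 1)) ≤ areaA a s t) ∧
    areaA a ((2 * a + 1) / (7 * a + 1))
        ((8 * a ^ 2 + 6 * a + 1) / (7 * a ^ 2 + 8 * a + 1)) =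
      (-2 * a ^ 2 + 3 * a + 2) / (2 * (a + 1) * (7 * a + 1)) := by
  have ha0 : 0 < a := by
    have : 1 < Real.sqrt 129 := Real.lt_sqrt_of_sq_lt (by norm_num)
    linarith
  have h6 : 0 ≤ 8 * a ^ 2 + a - 4 := eight_mul_sq_add_sub_four_nonneg ha1
  have h7 : 7 * a ^ 3 - 5 * a - 1 ≤ 0 := cubic_nonpos_of_le_root hroot ha0 ha2
  have h1 : 0.647 ≤ a := le_of_quadratic_nonneg ha0 h6
  have h2 : a ≤ 0.932 := le_of_cubic_nonpos h7
  have a_le_one : a ≤ 1 := by linarith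
  rw [← scaledMin_div_two_mul ha0.ne']
  constructor
  · intro s t hs hst ht
    rw [areaA_eq_scaledArea_div ha0 a_le_one hs hst ht]
    gcongr
    exact scaledMin_le_scaledArea ha0 h6 h7 hs hst ht
  · obtain ⟨hs, hs'⟩ := optS_mem_Icc h1 h2
    obtain ⟨ht, ht'⟩ := optT_mem_Icc h1 h2
    change areaA a (optS a) (optT a) = _
    rw [areaA_eq_scaledArea_div ha0 a_le_one (by linarith) (by linarith) ht',
      scaledArea_optS_optT ha0 h6 h7]
end

section
/- Let a > 0 and 0 ≤ s ≤ t ≤ 1 be real numbers satisfying 1 − as − s ≥ 0, 1 − as − t < 0, t − as ≥ 0, and 1 − at < 0. Then the area A(s,t,a) equals (a²s² + 2as² + 2s² − 2ats − 2ts + 2t² − 2t + 1)/(2a). -/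
/-! Up to the null set of points where one of `x`, `y`, `x + ay` is an endpoint `0`, `s`, `t`, `1`
of the colour blocks, the region is a disjoint union of four right triangles with legs parallel to
the axes and hypotenuse of direction `x + ay = const`. The other combinations of blocks are void:
since `at > 1`, no point of the region has `y > t`, and since `y ≥ 0`, a point with `x > t` also has
`x + ay > t`. At most one of the two triangles with corner `(s, s)` is nonempty, depending on the
sign of `s + as - t`, so in either case they contribute `(s + as - t)² / (2a)`. -/

open MeasureTheory Set

theorem ae_linearForm_notMem_of_countable {E : Type*} [NormedAddCommGroup E] [NormedSpace ℝ E]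
    [FiniteDimensional ℝ E] [MeasurableSpace E] [BorelSpace E] (μ : Measure E)
    [μ.IsAddHaarMeasure] {φ : E →ₗ[ℝ] ℝ} (hφ : φ ≠ 0) {S : Set ℝ} (hS : S.Countable) :
    ∀ᵐ x ∂μ, φ x ∉ S :=
  (ae_comp_linearMap_mem_iff φ μ volume (LinearMap.surjective hφ) hS.measurableSet.compl).2
    (hS.ae_notMem volume)

theorem max_zero_sq_add_max_neg_zero_sq (x : ℝ) : max x 0 ^ 2 + max (-x) 0 ^ 2 = x ^ 2 := by
  rcases le_total x 0 with hx | hx <;> simp [hx]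

theorem setIntegral_Ioc_sub_div (a u b : ℝ) :
    ∫ x in Ioc u b, (b - x) / a = max (b - u) 0 ^ 2 / (2 * a) := by
  rcases le_total b u with hbu | hub
  · simp [Ioc_eq_empty_of_le hbu, max_eq_right (sub_nonpos.2 hbu)]
  · rw [max_eq_left (sub_nonneg.2 hub), ← intervalIntegral.integral_of_le hub,
      intervalIntegral.integral_div, intervalIntegral.integral_comp_sub_left (fun x ↦ x) b,
      integral_id, sub_self, zero_pow two_ne_zero, sub_zero, div_div]

section Triangles

/-- The open right triangle with legs along `x = u` and `y = v`, lying above and to the right of its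
corner `(u, v)` and cut off by the line `x + a y = w`; it is empty if `w ≤ u + a v`. -/
def lowerTriangle (a u v w : ℝ) : Set (ℝ × ℝ) :=
  {p | u < p.1 ∧ v < p.2 ∧ p.1 + a * p.2 < w}

/-- The open right triangle with legs along `x = u` and `y = v`, lying below and to the left of its
corner `(u, v)` and cut off by the line `x + a y = w`; it is empty if `u + a v ≤ w`. -/
def upperTriangle (a u v w : ℝ) : Set (ℝ × ℝ) :=
  {p | p.1 < u ∧ p.2 < v ∧ w < p.1 + a * p.2}

variable (a u v w : ℝ)

theorem neg_preimage_lowerTriangle :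
    Neg.neg ⁻¹' lowerTriangle a (-u) (-v) (-w) = upperTriangle a u v w := by
  ext p
  simp only [lowerTriangle, upperTriangle, mem_preimage, mem_ofPred_eq, Prod.fst_neg, Prod.snd_neg,
    neg_lt_neg_iff, mul_neg, ← neg_add]

theorem measurableSet_lowerTriangle : MeasurableSet (lowerTriangle a u v w) := by
  unfold lowerTriangle
  measurability

theorem measurableSet_upperTriangle : MeasurableSet (upperTriangle a u v w) :=
  neg_preimage_lowerTriangle a u v w ▸ measurable_neg (measurableSet_lowerTriangle a _ _ _)

variable {a}

theorem lowerTriangle_eq_regionBetween (ha : 0 < a) :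
    lowerTriangle a u v w =
      regionBetween (fun _ ↦ v) (fun x ↦ (w - x) / a) (Ioc u (w - a * v)) := by
  ext ⟨x, y⟩
  simp only [lowerTriangle, regionBetween, mem_ofPred_eq, mem_Ioc, mem_Ioo, lt_div_iff₀ ha]
  constructor
  · rintro ⟨hx, hy, hxy⟩
    exact ⟨⟨hx, by nlinarith⟩, hy, by linarith⟩
  · rintro ⟨⟨hx, -⟩, hy, hxy⟩
    exact ⟨hx, hy, by linarith⟩

theorem volume_lowerTriangle (ha : 0 < a) :
    volume (lowerTriangle a u v w) =
      ENNReal.ofReal (max (w - (u + a * v)) 0 ^ 2 / (2 * a)) := by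
  have height (x : ℝ) : (w - x) / a - v = (w - a * v - x) / a := by field_simp; ring
  have height_nonneg : ∀ x ∈ Ioc u (w - a * v), v ≤ (w - x) / a := fun x hx ↦ by
    rw [← sub_nonneg, height]
    exact div_nonneg (sub_nonneg.2 hx.2) ha.le
  have hint : IntegrableOn (fun x ↦ (w - x) / a) (Ioc u (w - a * v)) :=
    Continuous.integrableOn_Ioc (by fun_prop)
  rw [lowerTriangle_eq_regionBetween u v w ha, Measure.volume_eq_prod,
    volume_regionBetween_eq_integral continuous_const.integrableOn_Ioc hint measurableSet_Ioc
      height_nonneg]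
  simp only [Pi.sub_apply, height, setIntegral_Ioc_sub_div]
  ring_nf

theorem volume_upperTriangle (ha : 0 < a) :
    volume (upperTriangle a u v w) =
      ENNReal.ofReal (max (u + a * v - w) 0 ^ 2 / (2 * a)) := by
  rw [← neg_preimage_lowerTriangle, Measure.measure_preimage_neg, volume_lowerTriangle _ _ _ ha]
  ring_nf

theorem volume_upperTriangle_add_volume_lowerTriangle (ha : 0 < a) :
    volume (upperTriangle a u v w) + volume (lowerTriangle a u v w) =
      ENNReal.ofReal ((u + a * v - w) ^ 2 / (2 * a)) := by
  rw [volume_upperTriangle u v w ha, volume_lowerTriangle u v w ha,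
    ← ENNReal.ofReal_add (by positivity) (by positivity), ← add_div,
    ← max_zero_sq_add_max_neg_zero_sq (u + a * v - w), neg_sub]

end Triangles

section MonochromaticRegion

/-- The region `Ω(a,s,t)` of pairs `(x, y)` for which `x`, `y` and `x + a y` have the same colour,
where `[0,s] ∪ (t,1]` is red and `(s,t]` is blue; its area is `areaA a s t`. -/
def monochromaticRegion (a s t : ℝ) : Set (ℝ × ℝ) :=
  {p | ((p.1 ∈ Icc 0 s ∪ Ioc t 1) ∧ (p.2 ∈ Icc 0 s ∪ Ioc t 1) ∧
      (p.1 + a * p.2 ∈ Icc 0 s ∪ Ioc t 1)) ∨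
    (p.1 ∈ Ioc s t ∧ p.2 ∈ Ioc s t ∧ p.1 + a * p.2 ∈ Ioc s t)}

/-- The four open triangles that make up `monochromaticRegion a s t` up to a null set when
`1 - t ≤ a s ≤ min t (1 - s)` and `1 ≤ a t`: three red ones, followed by a blue one. -/
def monochromaticTriangles (a s t : ℝ) : Set (ℝ × ℝ) :=
  lowerTriangle a 0 0 s ∪ (lowerTriangle a t 0 1 ∪
    (upperTriangle a s s t ∪ lowerTriangle a s s t))

variable {a s t : ℝ}

theorem lowerTriangle_zero_zero_subset_monochromaticRegion (ha : 1 ≤ a) :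
    lowerTriangle a 0 0 s ⊆ monochromaticRegion a s t := by
  rintro ⟨x, y⟩ ⟨hx, hy, hxy⟩
  dsimp only at hx hy hxy
  have hay : y ≤ a * y := le_mul_of_one_le_left hy.le ha
  exact .inl ⟨.inl ⟨hx.le, by linarith⟩, .inl ⟨hy.le, by linarith⟩, .inl ⟨by linarith, hxy.le⟩⟩

theorem lowerTriangle_right_zero_subset_monochromaticRegion (ha : 0 < a) (h : 1 ≤ t + a * s) :
    lowerTriangle a t 0 1 ⊆ monochromaticRegion a s t := by
  rintro ⟨x, y⟩ ⟨hx, hy, hxy⟩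
  dsimp only at hx hy hxy
  have hay : 0 < a * y := mul_pos ha hy
  have hys : y ≤ s := le_of_mul_le_mul_left (by linarith) ha
  exact .inl ⟨.inr ⟨hx, by linarith⟩, .inl ⟨hy.le, hys⟩, .inr ⟨by linarith, hxy.le⟩⟩

theorem upperTriangle_corner_subset_monochromaticRegion (ha : 0 < a) (hst : s ≤ t)
    (hat : a * s ≤ t) (h : s + a * s ≤ 1) :
    upperTriangle a s s t ⊆ monochromaticRegion a s t := by
  rintro ⟨x, y⟩ ⟨hx, hy, hxy⟩
  dsimp only at hx hy hxy
  have hay : a * y < a * s := mul_lt_mul_of_pos_left hy ha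
  have hy0 : 0 < y := pos_of_mul_pos_right (show 0 < a * y by linarith) ha.le
  exact .inl ⟨.inl ⟨by linarith, hx.le⟩, .inl ⟨hy0.le, hy.le⟩, .inr ⟨hxy, by linarith⟩⟩

theorem lowerTriangle_corner_subset_monochromaticRegion (ha : 1 ≤ a) (hs : 0 ≤ s) :
    lowerTriangle a s s t ⊆ monochromaticRegion a s t := by
  rintro ⟨x, y⟩ ⟨hx, hy, hxy⟩
  dsimp only at hx hy hxy
  have hay : y ≤ a * y := le_mul_of_one_le_left (hs.trans hy.le) ha
  exact .inr ⟨⟨hx, by linarith⟩, ⟨hy, by linarith⟩, ⟨by linarith, hxy.le⟩⟩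

theorem monochromaticTriangles_subset_monochromaticRegion (ha : 1 ≤ a) (hs : 0 ≤ s)
    (hst : s ≤ t) (h₁ : s + a * s ≤ 1) (h₂ : 1 ≤ t + a * s) (h₃ : a * s ≤ t) :
    monochromaticTriangles a s t ⊆ monochromaticRegion a s t :=
  have ha0 : 0 < a := one_pos.trans_le ha
  union_subset (lowerTriangle_zero_zero_subset_monochromaticRegion ha) <|
    union_subset (lowerTriangle_right_zero_subset_monochromaticRegion ha0 h₂) <|
      union_subset (upperTriangle_corner_subset_monochromaticRegion ha0 hst h₃ h₁)
        (lowerTriangle_corner_subset_monochromaticRegion ha hs)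

theorem mem_monochromaticTriangles_of_notMem_endpoints (ha : 0 < a) (hs : 0 ≤ s) (hst : s ≤ t)
    (ht : t ≤ 1) (hat : 1 ≤ a * t) {p : ℝ × ℝ} (hp : p ∈ monochromaticRegion a s t)
    (hx : p.1 ∉ ({0, s, t, 1} : Set ℝ)) (hy : p.2 ∉ ({0, s, t, 1} : Set ℝ))
    (hz : p.1 + a * p.2 ∉ ({0, s, t, 1} : Set ℝ)) :
    p ∈ monochromaticTriangles a s t := by
  obtain ⟨x, y⟩ := p
  simp only [mem_insert_iff, mem_singleton_iff, not_or, ← ne_eq] at hx hy hz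
  obtain ⟨hx0, hxs, -, -⟩ := hx
  obtain ⟨hy0, hys, -, -⟩ := hy
  obtain ⟨-, hzs, hzt, hz1⟩ := hz
  rcases hp with ⟨hxred, hyred, hzred⟩ | ⟨hx, hy, hz⟩
  · have hx_nonneg : 0 ≤ x := hxred.elim And.left fun hx ↦ (hs.trans hst).trans hx.1.le
    have hz_le_one : x + a * y ≤ 1 := hzred.elim (fun hz ↦ hz.2.trans (hst.trans ht)) And.right
    have hy_le : y ≤ t := le_of_mul_le_mul_left (by linarith) ha
    obtain ⟨hy_nonneg, hy_le_s⟩ : y ∈ Icc 0 s := hyred.resolve_right fun hy ↦ hy_le.not_gt hy.1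
    have hy_pos : 0 < y := hy_nonneg.lt_of_ne' hy0
    rcases hxred with hx | hx
    · rcases hzred with hz | hz
      · exact .inl ⟨hx_nonneg.lt_of_ne' hx0, hy_pos, hz.2.lt_of_ne hzs⟩
      · exact .inr (.inr (.inl ⟨hx.2.lt_of_ne hxs, hy_le_s.lt_of_ne hys, hz.1⟩))
    · exact .inr (.inl ⟨hx.1, hy_pos, hz_le_one.lt_of_ne hz1⟩)
  · exact .inr (.inr (.inr ⟨hx.1, hy.1, hz.2.lt_of_ne hzt⟩))

theorem ae_coordinates_notMem_of_countable (a : ℝ) {S : Set ℝ} (hS : S.Countable) :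
    ∀ᵐ p : ℝ × ℝ, p.1 ∉ S ∧ p.2 ∉ S ∧ p.1 + a * p.2 ∉ S := by
  have hfst : LinearMap.fst ℝ ℝ ℝ ≠ 0 := fun h ↦ by simpa using LinearMap.congr_fun h (1, 0)
  have hsnd : LinearMap.snd ℝ ℝ ℝ ≠ 0 := fun h ↦ by simpa using LinearMap.congr_fun h (0, 1)
  have hsum : LinearMap.fst ℝ ℝ ℝ + a • LinearMap.snd ℝ ℝ ℝ ≠ 0 := fun h ↦ by
    simpa using LinearMap.congr_fun h (1, 0)
  filter_upwards [ae_linearForm_notMem_of_countable volume hfst hS,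
    ae_linearForm_notMem_of_countable volume hsnd hS,
    ae_linearForm_notMem_of_countable volume hsum hS] with p hx hy hz
  exact ⟨hx, hy, hz⟩

theorem monochromaticRegion_ae_eq_monochromaticTriangles (hs : 0 ≤ s) (hst : s ≤ t) (ht : t ≤ 1)
    (ha : 1 ≤ a) (h₁ : s + a * s ≤ 1) (h₂ : 1 ≤ t + a * s) (h₃ : a * s ≤ t) (hat : 1 ≤ a * t) :
    monochromaticRegion a s t =ᵐ[volume] monochromaticTriangles a s t := by
  have hendpoints : ({0, s, t, 1} : Set ℝ).Countable := (toFinite _).countable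
  refine Filter.EventuallyLE.antisymm ?_
    (monochromaticTriangles_subset_monochromaticRegion ha hs hst h₁ h₂ h₃).eventuallyLE
  filter_upwards [ae_coordinates_notMem_of_countable a hendpoints] with p ⟨hx, hy, hz⟩ hp
  exact mem_monochromaticTriangles_of_notMem_endpoints (one_pos.trans_le ha) hs hst ht hat hp
    hx hy hz

theorem volume_monochromaticTriangles_eq_add (ha : 0 ≤ a) (hst : s ≤ t) :
    volume (monochromaticTriangles a s t) =
      volume (lowerTriangle a 0 0 s) + (volume (lowerTriangle a t 0 1) +
        (volume (upperTriangle a s s t) + volume (lowerTriangle a s s t))) := by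
  have hlower := measurableSet_lowerTriangle
  have hupper := measurableSet_upperTriangle
  have hdisj_corner : Disjoint (upperTriangle a s s t) (lowerTriangle a s s t) :=
    disjoint_left.2 fun _ hp hq ↦ hp.1.not_gt hq.1
  have hdisj_right : Disjoint (lowerTriangle a t 0 1)
      (upperTriangle a s s t ∪ lowerTriangle a s s t) := by
    refine disjoint_left.2 ?_
    rintro ⟨x, y⟩ ⟨hx, hy, -⟩ (⟨hxs, -, -⟩ | ⟨-, -, hz⟩)
    · exact (hst.trans_lt hx).not_gt hxs
    · exact (hx.trans_le (le_add_of_nonneg_right (mul_nonneg ha hy.le))).not_gt hz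
  have hdisj_zero : Disjoint (lowerTriangle a 0 0 s) (lowerTriangle a t 0 1 ∪
      (upperTriangle a s s t ∪ lowerTriangle a s s t)) := by
    refine disjoint_left.2 ?_
    rintro ⟨x, y⟩ ⟨-, hy, hz⟩ hp
    have hxs : x < s := (le_add_of_nonneg_right (mul_nonneg ha hy.le)).trans_lt hz
    rcases hp with ⟨htx, -, -⟩ | ⟨-, -, htz⟩ | ⟨hsx, -, -⟩
    · exact (hst.trans_lt htx).not_gt hxs
    · exact (hst.trans_lt htz).not_gt hz
    · exact hsx.not_gt hxs
  rw [monochromaticTriangles, measure_union hdisj_zero ((hlower ..).union ((hupper ..).union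
    (hlower ..))), measure_union hdisj_right ((hupper ..).union (hlower ..)),
    measure_union hdisj_corner (hlower ..)]

theorem volume_monochromaticTriangles (ha : 0 < a) (hs : 0 ≤ s) (hst : s ≤ t) (ht : t ≤ 1) :
    volume (monochromaticTriangles a s t) =
      ENNReal.ofReal ((s ^ 2 + (1 - t) ^ 2 + (s + a * s - t) ^ 2) / (2 * a)) := by
  rw [volume_monochromaticTriangles_eq_add ha.le hst,
    volume_upperTriangle_add_volume_lowerTriangle _ _ _ ha, volume_lowerTriangle _ _ _ ha,
    volume_lowerTriangle _ _ _ ha, ← ENNReal.ofReal_add (by positivity) (by positivity),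
    ← ENNReal.ofReal_add (by positivity) (by positivity)]
  simp only [mul_zero, add_zero, sub_zero, max_eq_left hs, max_eq_left (sub_nonneg.2 ht)]
  ring_nf

end MonochromaticRegion

/-- In region (R₇), characterized by `1 − as − s ≥ 0`, `1 − as − t < 0`,
`t − as ≥ 0` and `1 − at < 0`, the area is
`A(s,t,a) = (a²s² + 2as² + 2s² − 2ats − 2ts + 2t² − 2t + 1)/(2a)`. -/
theorem area_region_R7 (a s t : ℝ) (ha : 0 < a) (hs : 0 ≤ s) (hst : s ≤ t)
    (ht : t ≤ 1) (hC2 : 0 ≤ 1 - a * s - s) (hC3 : 1 - a * s - t < 0)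
    (hC4 : 0 ≤ t - a * s) (hC6 : 1 - a * t < 0) :
    areaA a s t = (a ^ 2 * s ^ 2 + 2 * a * s ^ 2 + 2 * s ^ 2 - 2 * a * t * s -
      2 * t * s + 2 * t ^ 2 - 2 * t + 1) / (2 * a) := by
  have hat : 1 < a * t := sub_neg.1 hC6
  have ha1 : 1 < a := hat.trans_le (mul_le_of_le_one_right ha.le ht)
  have hregion : monochromaticRegion a s t =ᵐ[volume] monochromaticTriangles a s t :=
    monochromaticRegion_ae_eq_monochromaticTriangles hs hst ht ha1.le (by linarith)
      (by linarith) (by linarith) hat.le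
  calc areaA a s t = (volume (monochromaticTriangles a s t)).toReal :=
        congrArg ENNReal.toReal (measure_congr hregion)
    _ = (s ^ 2 + (1 - t) ^ 2 + (s + a * s - t) ^ 2) / (2 * a) := by
        rw [volume_monochromaticTriangles ha hs hst ht, ENNReal.toReal_ofReal (by positivity)]
    _ = _ := by ring
end
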